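/- arXiv:2309.11347 — 4 statements merged into one kernel-verified Lean document; each statement's English description precedes it below -/
import Mathlib

section
/- Let S be a Tychonoff pseudocompact right topological monoid, X a Tychonoff pseudocompact space, and π : S × X → X a separately continuous and quasicontinuous action such that π(1, x) = x for every x ∈ X. Then π is jointly continuous at every point of {1} × X. -/
open Filter Topology Set

/-- A space is pseudocompact if every continuous real-valued function on it is bounded. -/
def IsPseudocompact (X : Type*) [TopologicalSpace X] : Prop :=
  ∀ f : X → ℝ, Continuous f → ∃ M : ℝ, ∀ x : X, |f x| ≤ M

/-- A function is quasicontinuous. -/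
def QuasiContinuous {X Y : Type*} [TopologicalSpace X] [TopologicalSpace Y] (f : X → Y) : Prop :=
  ∀ x : X, ∀ V : Set Y, IsOpen V → f x ∈ V → ∀ U : Set X, IsOpen U → x ∈ U →
    ∃ W : Set X, IsOpen W ∧ W.Nonempty ∧ W ⊆ U ∧ f '' W ⊆ V

/-- Separate continuity of a function of two variables. -/
def SeparatelyContinuous {X Y Z : Type*} [TopologicalSpace X] [TopologicalSpace Y]
    [TopologicalSpace Z] (f : X × Y → Z) : Prop :=
  (∀ x : X, Continuous fun y : Y => f (x, y)) ∧ (∀ y : Y, Continuous fun x : X => f (x, y))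

/-- The space of continuous real-valued functions with the topology of pointwise
convergence, realized as a subspace of the product `Y → ℝ`. -/
def Cp (Y : Type*) [TopologicalSpace Y] : Type _ := {g : Y → ℝ // Continuous g}

noncomputable instance (Y : Type*) [TopologicalSpace Y] : TopologicalSpace (Cp Y) :=
  instTopologicalSpaceSubtype

/-- `(X, Y)` is a Grothendieck pair if every continuous image of `X` in `C_p(Y)`
has compact closure in `C_p(Y)`. -/
def GrothendieckPair (X Y : Type*) [TopologicalSpace X] [TopologicalSpace Y] : Prop :=
  ∀ F : X → Cp Y, Continuous F → IsCompact (closure (Set.range F))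

/-- `x` is a weak q-point relative to `A`. -/
def IsWeakQPoint {X : Type*} [TopologicalSpace X] (x : X) (A : Set X) : Prop :=
  ∃ φ : List (Set X) → Set X,
    (∀ l : List (Set X), (∀ U ∈ l, IsOpen U ∧ x ∈ U) →
      φ l ⊆ A ∧ ∃ T : Set X, T.Countable ∧ φ l ⊆ closure T) ∧
    (∀ U : ℕ → Set X, (∀ i : ℕ, IsOpen (U i) ∧ x ∈ U i) →
      (closure (⋃ i : ℕ, φ ((List.range (i + 1)).map U)) ∩ ⋂ i : ℕ, U i).Nonempty)

/-- A weak `q_D`-space. -/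
def IsWeakQDSpace (X : Type*) [TopologicalSpace X] : Prop :=
  ∃ D : Set X, Dense D ∧ ∀ A : Set X, A ⊆ D → ¬ IsClosed A → ∃ x : X, IsWeakQPoint x A

theorem aux_seq {σ : Type*} (P : ℕ → σ → Prop) (R : ℕ → σ → σ → Prop) (x0 : σ) (h0 : P 0 x0)
    (hs : ∀ n x, P n x → ∃ y, P (n + 1) y ∧ R n x y) :
    ∃ u : ℕ → σ, ∀ n, P n (u n) ∧ R n (u n) (u (n + 1)) := by
  choose! g hg using hs
  let u : ℕ → σ := fun n => Nat.rec x0 (fun n x => g n x) n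
  have hu : ∀ n, P n (u n) := by
    intro n
    induction n with
    | zero => exact h0
    | succ k ih => exact (hg k _ ih).1
  exact ⟨u, fun n => ⟨hu n, (hg n _ (hu n)).2⟩⟩

theorem aux_cluster {X : Type*} [TopologicalSpace X] [T35Space X] (hX : IsPseudocompact X)
    (W : ℕ → Set X) (hW : ∀ n, IsOpen (W n)) (hne : ∀ n, (W n).Nonempty) :
    ∃ x : X, ∀ O : Set X, IsOpen O → x ∈ O → ∀ m, ∃ n, m ≤ n ∧ (O ∩ W n).Nonempty := by
  by_contra hcon
  push Not at hcon
  choose w hw using hne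
  have hsep : ∀ n, ∃ f : X → ℝ, Continuous f ∧ f (w n) = n ∧ (∀ x, 0 ≤ f x) ∧
      ∀ x, x ∉ W n → f x = 0 := by
    intro n
    obtain ⟨f, hf, h0, h1⟩ := CompletelyRegularSpace.completely_regular (w n) (W n)ᶜ
      (hW n).isClosed_compl (by simpa using hw n)
    refine ⟨fun x => n * (1 - (f x : ℝ)), by fun_prop, by simp [h0], ?_, ?_⟩
    · intro x
      have := (f x).2.2
      exact mul_nonneg (by positivity) (by linarith)
    · intro x hx
      have : f x = 1 := h1 hx
      simp [this]
  choose f hf hfw hf0 hfs using hsep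
  have hlf : LocallyFinite fun n => Function.support (f n) := by
    intro x
    obtain ⟨O, hO, hxO, m, hm⟩ := hcon x
    refine ⟨O, hO.mem_nhds hxO, (Set.finite_lt_nat m).subset ?_⟩
    rintro n ⟨y, hy1, hy2⟩
    by_contra hn
    have hn' : m ≤ n := by simpa using hn
    have h3 := hm n hn'
    have : y ∈ O ∩ W n := ⟨hy2, by
      by_contra hyW
      exact hy1 (hfs n y hyW)⟩
    rw [h3] at this
    exact this
  obtain ⟨M, hM⟩ := hX (fun x => ∑ᶠ n, f n x) (continuous_finsum hf hlf)
  obtain ⟨n, hn⟩ := exists_nat_gt M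
  have h1 : f n (w n) ≤ ∑ᶠ k, f k (w n) := by
    refine single_le_finsum (f := fun k => f k (w n)) n ?_ ?_
    · exact hlf.point_finite (w n)
    · intro k; exact hf0 k _
  have h2 := le_abs_self (∑ᶠ k, f k (w n))
  have h3 := hM (w n)
  rw [hfw] at h1
  linarith

theorem aux_cluster_le {X : Type*} [TopologicalSpace X] {W : ℕ → Set X} {x : X}
    (hx : ∀ O : Set X, IsOpen O → x ∈ O → ∀ m, ∃ n, m ≤ n ∧ (O ∩ W n).Nonempty)
    {F : X → ℝ} (hF : Continuous F) {c : ℝ} (m : ℕ) (h : ∀ n, m ≤ n → ∀ y ∈ W n, F y ≤ c) :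
    F x ≤ c := by
  by_contra hc
  push Not at hc
  obtain ⟨n, hn, y, hy1, hy2⟩ := hx {y | c < F y} (isOpen_lt continuous_const hF) hc m
  exact absurd (h n hn y hy2) (not_le.2 hy1)

theorem aux_cluster_ge {X : Type*} [TopologicalSpace X] {W : ℕ → Set X} {x : X}
    (hx : ∀ O : Set X, IsOpen O → x ∈ O → ∀ m, ∃ n, m ≤ n ∧ (O ∩ W n).Nonempty)
    {F : X → ℝ} (hF : Continuous F) {c : ℝ} (m : ℕ) (h : ∀ n, m ≤ n → ∀ y ∈ W n, c ≤ F y) :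
    c ≤ F x := by
  have := aux_cluster_le hx hF.neg (c := -c) m (fun n hn y hy => neg_le_neg (h n hn y hy))
  exact neg_le_neg_iff.1 this

/-- rectangular quasicontinuity of a curried real function -/
def AuxQC {A B : Type*} [TopologicalSpace A] [TopologicalSpace B] (f : A → B → ℝ) : Prop :=
  ∀ (a : A) (b : B) (O : Set ℝ), IsOpen O → f a b ∈ O → ∀ (U : Set A) (V : Set B),
    IsOpen U → IsOpen V → a ∈ U → b ∈ V → ∃ (U' : Set A) (V' : Set B), IsOpen U' ∧ IsOpen V' ∧
      U'.Nonempty ∧ V'.Nonempty ∧ U' ⊆ U ∧ V' ⊆ V ∧ ∀ a' ∈ U', ∀ b' ∈ V', f a' b' ∈ O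

theorem aux_shrink {A B : Type*} [TopologicalSpace A] [TopologicalSpace B] {f : A → B → ℝ}
    (hq : AuxQC f) {c : ℝ} (s : ℕ → A) (C : ℕ → Set A) (hC : ∀ i, IsOpen (C i))
    (hs : ∀ i, s i ∈ C i) (V : Set B) (hV : IsOpen V) (hVne : V.Nonempty) (n : ℕ)
    (h : ∀ i < n, ∀ b ∈ V, f (s i) b < c) :
    ∃ (C' : ℕ → Set A) (V' : Set B), (∀ i, IsOpen (C' i) ∧ (C' i).Nonempty ∧ C' i ⊆ C i) ∧
      IsOpen V' ∧ V'.Nonempty ∧ V' ⊆ V ∧ ∀ i < n, ∀ a ∈ C' i, ∀ b ∈ V', f a b < c := by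
  induction n with
  | zero => exact ⟨C, V, fun i => ⟨hC i, ⟨s i, hs i⟩, Subset.rfl⟩, hV, hVne, Subset.rfl, by simp⟩
  | succ n ih =>
    obtain ⟨C', V', h1, h2, h3, h4, h5⟩ := ih (fun i hi => h i (by omega))
    obtain ⟨b, hb⟩ := h3
    obtain ⟨U', V'', g1, g2, g3, g4, g5, g6, g7⟩ := hq (s n) b (Iio c) isOpen_Iio
      (h n (by omega) b (h4 hb)) (C n) V' (hC n) h2 (hs n) hb
    refine ⟨Function.update C' n U', V'', ?_, g2, g4, g6.trans h4, ?_⟩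
    · intro i
      by_cases hi : i = n
      · subst hi; simpa using ⟨g1, g3, g5⟩
      · simpa [hi] using h1 i
    · intro i hi a ha b hb
      by_cases hin : i = n
      · subst hin
        exact g7 a (by simpa using ha) b hb
      · rw [Function.update_of_ne hin] at ha
        exact h5 i (by omega) a ha b (g6 hb)

theorem aux_joint {A B : Type*} [TopologicalSpace A] [TopologicalSpace B] [T35Space A] [T35Space B]
    (hA : IsPseudocompact A) (hB : IsPseudocompact B) {f : A → B → ℝ}
    (h1 : ∀ a, Continuous (f a)) (h2 : ∀ b, Continuous fun a => f a b) (hq : AuxQC f)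
    {c d : ℝ} (hcd : c < d) (x0 : B) (U0 : Set A) (hU0 : IsOpen U0) (hU0ne : U0.Nonempty)
    (h0 : ∀ a ∈ U0, f a x0 < c) :
    ∃ (U : Set A) (N : Set B), IsOpen U ∧ U.Nonempty ∧ U ⊆ U0 ∧ IsOpen N ∧ x0 ∈ N ∧
      ∀ a ∈ U, ∀ b ∈ N, f a b ≤ d := by
  by_contra hcon
  push Not at hcon
  have hbig : ∀ (U : Set A) (N : Set B), IsOpen U → U.Nonempty → U ⊆ U0 → IsOpen N → x0 ∈ N →
      ∃ (U' : Set A) (V' : Set B), IsOpen U' ∧ IsOpen V' ∧ U'.Nonempty ∧ V'.Nonempty ∧ U' ⊆ U ∧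
        V' ⊆ N ∧ ∀ a' ∈ U', ∀ b' ∈ V', d < f a' b' := by
    intro U N hU hne hUs hN hx
    obtain ⟨a, ha, b, hb, hab⟩ := hcon U N hU hne hUs hN hx
    exact hq a b (Ioi d) isOpen_Ioi hab U N hU hN ha hb
  obtain ⟨u, hu⟩ := aux_seq (σ := (ℕ → Set A) × Set B)
    (fun n p => (∀ i, IsOpen (p.1 i) ∧ (p.1 i).Nonempty ∧ p.1 i ⊆ U0) ∧ IsOpen p.2 ∧ p.2.Nonempty ∧
      ∀ i, n ≤ i → p.1 i = p.1 n)
    (fun n p q => (∀ i, q.1 i ⊆ p.1 i) ∧ (∀ i ≤ n, ∀ a ∈ q.1 i, ∀ b ∈ q.2, f a b < c) ∧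
      ∀ i, n < i → ∀ a ∈ q.1 i, ∀ b ∈ q.2, d < f a b)
    (fun _ => U0, univ) ⟨fun i => ⟨hU0, hU0ne, Subset.rfl⟩, isOpen_univ, ⟨x0, trivial⟩, by simp⟩
    (by
      rintro n ⟨C, V⟩ ⟨hC, hV, hVne, hst⟩
      simp only at hC hV hVne hst
      choose s hs using fun i => (hC i).2.1
      obtain ⟨B', V1, k1, k2, k3, k4, k5, k6, k7⟩ := hbig (C n)
        (⋂ i ∈ Finset.range (n + 1), {b | f (s i) b < c}) (hC n).1 (hC n).2.1 (hC n).2.2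
        (isOpen_biInter_finset fun i _ => isOpen_lt (h1 _) continuous_const)
        (by simp only [mem_iInter]; exact fun i _ => h0 _ ((hC i).2.2 (hs i)))
      obtain ⟨C', V', l1, l2, l3, l4, l5⟩ := aux_shrink hq (c := c) s C (fun i => (hC i).1) hs V1
        k2 k4 (n + 1) (fun i hi b hb => by
          have := k6 hb
          simp only [mem_iInter] at this
          exact this i (Finset.mem_range.2 hi))
      refine ⟨(fun i => if i ≤ n then C' i else B', V'), ⟨?_, l2, l3, ?_⟩, ?_, ?_, ?_⟩
      · intro i
        by_cases hi : i ≤ n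
        · simpa [hi] using ⟨(l1 i).1, (l1 i).2.1, (l1 i).2.2.trans (hC i).2.2⟩
        · simpa [hi] using ⟨k1, k3, k5.trans (hC n).2.2⟩
      · intro i hi
        have : ¬ i ≤ n := by omega
        simp [this]
      · intro i
        by_cases hi : i ≤ n
        · simpa [hi] using (l1 i).2.2
        · simpa [hi, hst i (by omega)] using k5
      · intro i hi a ha b hb
        simp only [hi, if_true] at ha
        exact l5 i (by omega) a ha b hb
      · intro i hi a ha b hb
        simp only [not_le.2 hi, if_false] at ha
        exact k7 a ha b (l4 hb))
  have hmono : ∀ i, Antitone fun n => (u n).1 i :=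
    fun i => antitone_nat_of_succ_le fun n => (hu n).2.1 i
  obtain ⟨z, hz⟩ := aux_cluster hB (fun n => (u n).2) (fun n => (hu n).1.2.1)
    (fun n => (hu n).1.2.2.1)
  obtain ⟨c1, hc1, hc1d⟩ := exists_between hcd
  have hn : ∀ i, ∃ n, ∀ a ∈ (u n).1 i, f a z ≤ c1 := by
    intro i
    by_contra hc
    push Not at hc
    obtain ⟨a, ha⟩ := aux_cluster hA (fun n => (u n).1 i ∩ {a | c1 < f a z})
      (fun n => ((hu n).1.1 i).1.inter (isOpen_lt continuous_const (h2 z)))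
      (fun n => by obtain ⟨a, ha, hb⟩ := hc n; exact ⟨a, ha, hb⟩)
    have e1 : c1 ≤ f a z := aux_cluster_ge ha (h2 z) 0 (fun n _ y hy => le_of_lt hy.2)
    have e2 : f a z ≤ c := by
      refine aux_cluster_le hz (h1 a) (i + 1) ?_
      intro m hm b hb
      refine aux_cluster_le ha (h2 b) m ?_
      intro n hn y hy
      obtain ⟨k, rfl⟩ : ∃ k, m = k + 1 := ⟨m - 1, by omega⟩
      exact ((hu k).2.2.1 i (by omega) y (hmono i hn hy.1) b hb).le
    linarith
  choose n hn using hn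
  obtain ⟨a, ha⟩ := aux_cluster hA (fun i => (u (max i (n i))).1 i)
      (fun i => ((hu _).1.1 i).1) (fun i => ((hu _).1.1 i).2.1)
  have e1 : f a z ≤ c1 := aux_cluster_le ha (h2 z) 0
    (fun i _ y hy => hn i y (hmono i (le_max_right _ _) hy))
  have e2 : d ≤ f a z := by
    refine aux_cluster_ge hz (h1 a) 1 ?_
    intro m hm b hb
    refine aux_cluster_ge ha (h2 b) m ?_
    intro i hi y hy
    obtain ⟨k, rfl⟩ : ∃ k, m = k + 1 := ⟨m - 1, by omega⟩
    exact ((hu k).2.2.2 i (by omega) y (hmono i (hi.trans (le_max_left _ _)) hy) b hb).le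
  linarith

theorem AuxQC.neg_swap {A B : Type*} [TopologicalSpace A] [TopologicalSpace B] {f : A → B → ℝ}
    (hq : AuxQC f) : AuxQC fun b a => - f a b := by
  intro b a O hO hab V U hV hU hb ha
  obtain ⟨U', V', g1, g2, g3, g4, g5, g6, g7⟩ := hq a b (Neg.neg ⁻¹' O)
    (hO.preimage continuous_neg) hab U V hU hV ha hb
  exact ⟨V', U', g2, g1, g4, g3, g6, g5, fun y hy x hx => g7 x hx y hy⟩

/-- the Grothendieck-type step -/
theorem aux_groth {A B : Type*} [TopologicalSpace A] [TopologicalSpace B] [T35Space A] [T35Space B]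
    (hA : IsPseudocompact A) (hB : IsPseudocompact B) {f : A → B → ℝ}
    (h1 : ∀ a, Continuous (f a)) (h2 : ∀ b, Continuous fun a => f a b) (hq : AuxQC f)
    {c d : ℝ} (hcd : c < d) (e : A) (D : Set A) (hD : e ∈ closure D) (l : Filter B) [l.NeBot]
    (hl : ∀ᶠ b in l, d < f e b) (hDl : ∀ s ∈ D, ∀ᶠ b in l, f s b < c) : False := by
  obtain ⟨c1, hc1, hcd1⟩ := exists_between hcd
  obtain ⟨d1, hd1, hdd1⟩ := exists_between hcd1
  -- state: finite set of points, M, V, s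
  obtain ⟨u, hu⟩ := aux_seq (σ := (Finset A × A) × (Set A × Set B))
    (fun n p => (↑p.1.1 ⊆ D) ∧ p.1.2 ∈ D ∧ p.1.2 ∈ p.2.1 ∧ IsOpen p.2.1 ∧ e ∈ p.2.1 ∧ IsOpen p.2.2 ∧
      p.2.2.Nonempty)
    (fun n p q => p.1.1 ⊆ q.1.1 ∧ p.1.2 ∈ q.1.1 ∧ q.2.1 ⊆ p.2.1 ∧
      (∀ s ∈ q.1.1, ∀ b ∈ q.2.2, f s b < c) ∧ ∀ s ∈ q.2.1, ∀ b ∈ q.2.2, d1 ≤ f s b)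
    ((∅, (closure_nonempty_iff.1 ⟨e, hD⟩).some), (univ, univ))
    ⟨by simp, (closure_nonempty_iff.1 ⟨e, hD⟩).some_mem, trivial, isOpen_univ, trivial, isOpen_univ,
      by obtain ⟨b, -⟩ := hl.exists; exact ⟨b, trivial⟩⟩
    (by
      classical
      rintro n ⟨⟨F, s⟩, ⟨M, V⟩⟩ ⟨p1, p2, p3, p4, p5, p6, p7⟩
      simp only at p1 p2 p3 p4 p5 p6 p7
      set F' := insert s F with hF'
      have hF'D : ∀ t ∈ F', t ∈ D := by
        intro t ht
        rcases Finset.mem_insert.1 ht with rfl | ht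
        · exact p2
        · exact p1 ht
      have hev : ∀ᶠ b in l, d < f e b ∧ ∀ t ∈ F', f t b < c :=
        hl.and ((Filter.eventually_all_finset F').2 fun t ht => hDl t (hF'D t ht))
      have hYo : IsOpen ({b | d < f e b} ∩ ⋂ t ∈ F', {b | f t b < c}) :=
        (isOpen_lt continuous_const (h1 e)).inter
          (isOpen_biInter_finset fun t _ => isOpen_lt (h1 t) continuous_const)
      obtain ⟨b, hb1, hb2⟩ := hev.exists
      obtain ⟨V', N, q1, q2, q3, q4, q5, q6⟩ := aux_joint hB hA (f := fun b a => - f a b)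
        (fun b => (h2 b).neg) (fun a => (h1 a).neg) hq.neg_swap
        (c := -d) (d := -d1) (by linarith) e _ hYo
        ⟨b, hb1, by simp only [mem_iInter]; exact hb2⟩
        (fun b hb => neg_lt_neg hb.1)
      obtain ⟨s', hs'1, hs'2⟩ := mem_closure_iff.1 hD (M ∩ N) (p4.inter q4) ⟨p5, q5⟩
      refine ⟨((F', s'), (M ∩ N, V')), ⟨fun t ht => hF'D t ht, hs'2, hs'1, p4.inter q4, ⟨p5, q5⟩, q1,
        q2⟩, Finset.subset_insert _ _, Finset.mem_insert_self _ _, inter_subset_left, ?_, ?_⟩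
      · intro t ht b hb
        have := (q3 hb).2
        simp only [mem_iInter] at this
        exact this t ht
      · intro t ht b hb
        have := q6 b hb t ht.2
        linarith)
  have hFm : Monotone fun n => (u n).1.1 := monotone_nat_of_le_succ fun n => (hu n).2.1
  have hMm : Antitone fun n => (u n).2.1 := antitone_nat_of_succ_le fun n => (hu n).2.2.2.1
  obtain ⟨y, hy⟩ := aux_cluster hB (fun n => (u n).2.2) (fun n => (hu n).1.2.2.2.2.2.1)
    (fun n => (hu n).1.2.2.2.2.2.2)
  have hsy : ∀ n, f (u n).1.2 y ≤ c := by
    intro n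
    refine aux_cluster_le hy (h1 _) (n + 1) ?_
    intro m hm b hb
    obtain ⟨k, rfl⟩ : ∃ k, m = k + 1 := ⟨m - 1, by omega⟩
    exact ((hu k).2.2.2.2.1 _ (hFm hm (hu n).2.2.1) b hb).le
  obtain ⟨a, ha⟩ := aux_cluster hA (fun n => (u n).2.1 ∩ {s | f s y < c1})
    (fun n => (hu n).1.2.2.2.1.inter (isOpen_lt (h2 y) continuous_const))
    (fun n => ⟨(u n).1.2, (hu n).1.2.2.1, (hsy n).trans_lt hc1⟩)
  have e1 : f a y ≤ c1 := aux_cluster_le ha (h2 y) 0 (fun n _ s hs => le_of_lt hs.2)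
  have e2 : d1 ≤ f a y := by
    refine aux_cluster_ge hy (h1 a) 1 ?_
    intro m hm b hb
    refine aux_cluster_ge ha (h2 b) m ?_
    intro n hn s hs
    obtain ⟨k, rfl⟩ : ∃ k, m = k + 1 := ⟨m - 1, by omega⟩
    exact (hu k).2.2.2.2.2 s (hMm hn hs.1) b hb
  linarith

theorem lawson_pseudocompact_identity_continuity
    {S X : Type*} [Monoid S] [TopologicalSpace S] [TopologicalSpace X]
    [T35Space S] [T35Space X]
    (hS_right : ∀ s : S, Continuous fun t : S => s * t)
    (hS : IsPseudocompact S) (hX : IsPseudocompact X)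
    (π : S × X → X)
    (haction : ∀ (s t : S) (x : X), π (s * t, x) = π (s, π (t, x)))
    (hone : ∀ x : X, π (1, x) = x)
    (hsep : SeparatelyContinuous π) (hqc : QuasiContinuous π) :
    ∀ x : X, ContinuousAt π (1, x) := by
  intro x
  have key : ∀ g : X → ℝ, Continuous g → ∀ d, g x < d → ∀ᶠ p in 𝓝 ((1 : S), x), g (π p) ≤ d := by
    intro g hg d hd
    by_contra hcon
    rw [Filter.not_eventually] at hcon
    have h1 : ∀ s : S, Continuous fun y => g (π (s, y)) := fun s => hg.comp (hsep.1 s)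
    have h2 : ∀ y : X, Continuous fun s => g (π (s, y)) := fun y => hg.comp (hsep.2 y)
    have hq : AuxQC fun (s : S) (y : X) => g (π (s, y)) := by
      intro a b O hO hab U V hU hV ha hb
      obtain ⟨W, hW, ⟨⟨a', b'⟩, hab'⟩, hWs, hWi⟩ := hqc (a, b) (g ⁻¹' O) (hO.preimage hg) hab
        (U ×ˢ V) (hU.prod hV) ⟨ha, hb⟩
      obtain ⟨U', V', hU', hV', ha', hb', hs⟩ := isOpen_prod_iff.1 hW a' b' hab'
      refine ⟨U', V', hU', hV', ⟨a', ha'⟩, ⟨b', hb'⟩, ?_, ?_, ?_⟩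
      · intro t ht
        exact (hWs (hs (mk_mem_prod ht hb'))).1
      · intro t ht
        exact (hWs (hs (mk_mem_prod ha' ht))).2
      · intro t ht y hy
        exact hWi ⟨_, hs (mk_mem_prod ht hy), rfl⟩
    obtain ⟨c0, hc0, hc0d⟩ := exists_between hd
    obtain ⟨c1, hc1, hc1d⟩ := exists_between hc0d
    obtain ⟨c2, hc2, hc2d⟩ := exists_between hc1d
    let D : Set S := {s | ∃ (U : Set S) (N : Set X), IsOpen U ∧ s ∈ U ∧ IsOpen N ∧ x ∈ N ∧
      ∀ t ∈ U, ∀ y ∈ N, g (π (t, y)) ≤ c1}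
    have hD : (1 : S) ∈ closure D := by
      rw [mem_closure_iff]
      intro O hO h1O
      obtain ⟨U, N, k1, ⟨t, ht⟩, k3, k4, k5, k6⟩ := aux_joint hS hX h1 h2 hq hc1 x
        (O ∩ {s | g (π (s, x)) < c0}) (hO.inter (isOpen_lt (h2 x) continuous_const))
        ⟨1, h1O, by simpa [hone] using hc0⟩ (fun a ha => ha.2)
      exact ⟨t, (k3 ht).1, U, N, k1, ht, k4, k5, k6⟩
    have hne : (𝓝 ((1 : S), x) ⊓ 𝓟 {p | ¬ g (π p) ≤ d}).NeBot :=
      Filter.frequently_mem_iff_neBot.1 hcon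
    refine aux_groth hS hX h1 h2 hq hc2d 1 D hD
      (Filter.map π (𝓝 ((1 : S), x) ⊓ 𝓟 {p | ¬ g (π p) ≤ d})) ?_ ?_
    · rw [Filter.eventually_map]
      filter_upwards [Filter.mem_inf_of_right (Filter.mem_principal_self _)] with p hp
      rw [hone]
      exact not_le.1 hp
    · rintro s ⟨U, N, k1, k2, k3, k4, k5⟩
      rw [Filter.eventually_map]
      apply Filter.Eventually.filter_mono inf_le_left
      have e1 : ∀ᶠ p : S × X in 𝓝 ((1 : S), x), s * p.1 ∈ U :=
        ((hS_right s).comp continuous_fst).continuousAt.eventually_mem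
          (by simpa using k1.mem_nhds k2)
      have e2 : ∀ᶠ p : S × X in 𝓝 ((1 : S), x), p.2 ∈ N :=
        continuous_snd.continuousAt.eventually_mem (k3.mem_nhds k4)
      filter_upwards [e1, e2] with p hp1 hp2
      have := k5 _ hp1 _ hp2
      rw [haction] at this
      exact this.trans_lt hc2
  unfold ContinuousAt
  rw [hone]
  intro O hO
  obtain ⟨O', hO's, hO', hxO'⟩ := mem_nhds_iff.1 hO
  obtain ⟨f, hf, hf0, hf1⟩ := CompletelyRegularSpace.completely_regular x O'ᶜ
    hO'.isClosed_compl (by simpa using hxO')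
  have := key (fun y => (f y : ℝ)) (by fun_prop) (1 / 2) (by simp [hf0])
  rw [Filter.mem_map]
  filter_upwards [this] with p hp
  apply hO's
  by_contra hc
  have h1 : f (π p) = 1 := hf1 hc
  rw [h1] at hp
  norm_num at hp
end

section
/- Let S be a Tychonoff pseudocompact right topological monoid, X a Tychonoff pseudocompact space, and π : S × X → X a separately continuous and quasicontinuous action. Then for every unit u of S, π is jointly continuous at every point of {u} × X. -/
open Filter Topology Set

theorem psc_cluster {X : Type*} [TopologicalSpace X] [CompletelyRegularSpace X]
    (hX : IsPseudocompact X) (G : ℕ → Set X) (hG : ∀ n, IsOpen (G n))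
    (hne : ∀ n, (G n).Nonempty) :
    ∃ y : X, ∀ O : Set X, IsOpen O → y ∈ O → ∀ N : ℕ, ∃ n, N ≤ n ∧ (O ∩ G n).Nonempty := by
  by_contra hcon
  push Not at hcon
  choose x hx using hne
  have h1 : ∀ n, ∃ f : X → ℝ, Continuous f ∧ (∀ z, 0 ≤ f z) ∧ f (x n) = n ∧
      Function.support f ⊆ G n := by
    intro n
    obtain ⟨f, hf, hf0, hf1⟩ := CompletelyRegularSpace.completely_regular (x n) (G n)ᶜ
      (hG n).isClosed_compl (by simpa using hx n)
    refine ⟨fun z => n * (1 - (f z : ℝ)), by fun_prop, ?_, ?_, ?_⟩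
    · intro z
      have := (f z).2.2
      exact mul_nonneg (Nat.cast_nonneg n) (by linarith)
    · simp [hf0]
    · intro z hz
      by_contra hzG
      apply hz
      have := hf1 hzG
      simp [this]
  choose f hfc hf0 hfx hfs using h1
  have hlf : LocallyFinite fun n => Function.support (f n) := by
    intro y
    obtain ⟨O, hO, hyO, N, hN⟩ := hcon y
    refine ⟨O, hO.mem_nhds hyO, (Set.finite_lt_nat N).subset ?_⟩
    rintro n ⟨z, hz, hzO⟩
    by_contra hn
    have := hN n (by simpa using hn)
    have hz' : z ∈ O ∩ G n := ⟨hzO, hfs n hz⟩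
    rw [this] at hz'
    exact hz'
  obtain ⟨M, hM⟩ := hX _ (continuous_finsum hfc hlf)
  obtain ⟨n, hn⟩ := exists_nat_gt M
  have h2 : f n (x n) ≤ ∑ᶠ i, f i (x n) :=
    single_le_finsum n (hlf.point_finite (x n)) (fun j => hf0 j (x n))
  have := hM (x n)
  rw [hfx] at h2
  have h3 := le_abs_self (∑ᶠ i, f i (x n))
  linarith

theorem pattern_false {S X : Type*} [TopologicalSpace S] [TopologicalSpace X]
    [CompletelyRegularSpace S] [CompletelyRegularSpace X]
    (hS : IsPseudocompact S) (hX : IsPseudocompact X)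
    (g : S × X → ℝ) (hg : SeparatelyContinuous g) (a b : ℝ) (hab : a < b)
    (U : ℕ → Set S) (hU : ∀ n, IsOpen (U n)) (t : ℕ → S) (ht : ∀ n, t n ∈ U n)
    (Y : ℕ → Set X) (hY : ∀ n, IsOpen (Y n)) (hYn : ∀ n, (Y n).Nonempty)
    (h1 : ∀ m n, m < n → ∀ s ∈ U n, ∀ y ∈ Y m, b ≤ g (s, y))
    (h2 : ∀ m n, n ≤ m → ∀ y ∈ Y m, g (t n, y) ≤ a) : False := by
  obtain ⟨y, hy⟩ := psc_cluster hX Y hY hYn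
  obtain ⟨c, hac, hcb⟩ := exists_between hab
  have hty : ∀ n, g (t n, y) ≤ a := by
    intro n
    by_contra hlt
    push Not at hlt
    obtain ⟨m, hm, z, hz, hzY⟩ := hy {z | a < g (t n, z)}
      (isOpen_lt continuous_const (hg.1 (t n))) hlt n
    exact absurd (h2 m n hm z hzY) (not_le.mpr hz)
  obtain ⟨s, hs⟩ := psc_cluster hS (fun n => U n ∩ {s | g (s, y) < c})
    (fun n => (hU n).inter (isOpen_lt (hg.2 y) continuous_const))
    (fun n => ⟨t n, ht n, (hty n).trans_lt hac⟩)
  have hsy : g (s, y) ≤ c := by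
    by_contra hlt
    push Not at hlt
    obtain ⟨m, hm, z, hz, hzY⟩ := hs {z | c < g (z, y)}
      (isOpen_lt continuous_const (hg.2 y)) hlt 0
    have hz2 : g (z, y) < c := hzY.2
    have hz1 : c < g (z, y) := hz
    linarith
  have hsY : ∀ m, ∀ z ∈ Y m, b ≤ g (s, z) := by
    intro m z hz
    by_contra hlt
    push Not at hlt
    obtain ⟨n, hn, w, hw, hwU⟩ := hs {w | g (w, z) < b}
      (isOpen_lt (hg.2 z) continuous_const) hlt (m+1)
    exact absurd (h1 m n hn w hwU.1 z hz) (not_le.mpr hw)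
  obtain ⟨m, hm, z, hz, hzY⟩ := hy {z | g (s, z) < b}
      (isOpen_lt (hg.1 s) continuous_const) (hsy.trans_lt hcb) 0
  exact absurd (hsY m z hzY) (not_le.mpr hz)

theorem state_false {S X : Type*} [TopologicalSpace S] [TopologicalSpace X]
    [CompletelyRegularSpace S] [CompletelyRegularSpace X]
    (hS : IsPseudocompact S) (hX : IsPseudocompact X)
    (g : S × X → ℝ) (hg : SeparatelyContinuous g) (a b : ℝ) (hab : a < b)
    (P : Set S × Set X → Prop) (p0 : Set S × Set X) (hp0 : P p0)
    (hPo : ∀ p, P p → IsOpen p.1)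
    (hstep : ∀ p, P p → ∃ t ∈ p.1, ∃ Y : Set X, IsOpen Y ∧ Y.Nonempty ∧
      ∃ q, P q ∧ q.1 ⊆ p.1 ∧ q.2 ⊆ p.2 ∧ Y ⊆ q.2 ∧ (∀ y ∈ q.2, g (t, y) ≤ a) ∧
        ∀ s ∈ q.1, ∀ y ∈ Y, b ≤ g (s, y)) : False := by
  have hs' : ∀ p : {p // P p}, ∃ (t : S) (Y : Set X) (q : {p // P p}), t ∈ p.1.1 ∧ IsOpen Y ∧
      Y.Nonempty ∧ q.1.1 ⊆ p.1.1 ∧ q.1.2 ⊆ p.1.2 ∧ Y ⊆ q.1.2 ∧ (∀ y ∈ q.1.2, g (t, y) ≤ a) ∧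
        ∀ s ∈ q.1.1, ∀ y ∈ Y, b ≤ g (s, y) := by
    rintro ⟨p, hp⟩
    obtain ⟨t, ht, Y, hY, hYn, q, hq, hr⟩ := hstep p hp
    exact ⟨t, Y, ⟨q, hq⟩, ht, hY, hYn, hr⟩
  choose t Y nx h1 h2 h3 h4 h5 h6 h7 h8 using hs'
  let st : ℕ → {p // P p} := fun n => Nat.rec ⟨p0, hp0⟩ (fun _ p => nx p) n
  have hst : ∀ n, st (n+1) = nx (st n) := fun n => rfl
  have hU : Antitone fun n => (st n).1.1 := antitone_nat_of_succ_le fun n => by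
    rw [hst]; exact h4 _
  have hQ : Antitone fun n => (st n).1.2 := antitone_nat_of_succ_le fun n => by
    rw [hst]; exact h5 _
  refine pattern_false hS hX g hg a b hab (fun n => (st n).1.1) (fun n => hPo _ (st n).2)
    (fun n => t (st n)) (fun n => h1 _) (fun n => Y (st n)) (fun n => h2 _) (fun n => h3 _) ?_ ?_
  · intro m n hmn s hs y hy
    have : s ∈ (st (m+1)).1.1 := hU (Nat.succ_le_of_lt hmn) hs
    exact h8 _ s this y hy
  · intro m n hnm y hy
    have h : y ∈ (st (m+1)).1.2 := h6 _ hy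
    have : y ∈ (st (n+1)).1.2 := hQ (Nat.succ_le_succ hnm) h
    exact h7 _ y this

theorem strong_quasi {S X : Type*} [TopologicalSpace S] [TopologicalSpace X]
    [CompletelyRegularSpace S] [CompletelyRegularSpace X]
    (hS : IsPseudocompact S) (hX : IsPseudocompact X)
    (g : S × X → ℝ) (hg : SeparatelyContinuous g) (hq : QuasiContinuous g)
    (b : ℝ) (t0 : S) (x0 : X) (hb : g (t0, x0) < b)
    (U : Set S) (hU : IsOpen U) (ht0 : t0 ∈ U) :
    ∃ T : Set S, IsOpen T ∧ T.Nonempty ∧ T ⊆ U ∧ ∃ W : Set X, IsOpen W ∧ x0 ∈ W ∧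
      ∀ t ∈ T, ∀ x ∈ W, g (t, x) ≤ b := by
  by_contra hcon
  push Not at hcon
  obtain ⟨a, ha, hab⟩ := exists_between hb
  have hopa : IsOpen {t | g (t, x0) < a} := isOpen_lt (hg.2 x0) continuous_const
  refine state_false hS hX g hg a b hab
    (fun p => IsOpen p.1 ∧ p.1.Nonempty ∧ p.1 ⊆ U ∩ {t | g (t, x0) < a} ∧ IsOpen p.2 ∧ x0 ∈ p.2)
    (U ∩ {t | g (t, x0) < a}, univ)
    ⟨hU.inter hopa, ⟨t0, ht0, ha⟩, subset_rfl, isOpen_univ, mem_univ _⟩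
    (fun p hp => hp.1) ?_
  rintro ⟨T, W⟩ ⟨hT, ⟨t, ht⟩, hTU, hW, hxW⟩
  dsimp only at *
  have hW' : IsOpen (W ∩ {x | g (t, x) < a}) :=
    hW.inter (isOpen_lt (hg.1 t) continuous_const)
  have hxW' : x0 ∈ W ∩ {x | g (t, x) < a} := ⟨hxW, (hTU ht).2⟩
  obtain ⟨s, hs, x, hx, hsx⟩ := hcon T hT ⟨t, ht⟩ (fun z hz => (hTU hz).1) _ hW' hxW'
  obtain ⟨R, hR, ⟨⟨r1, r2⟩, hr⟩, hRs, hRi⟩ := hq (s, x) (Ioi b) isOpen_Ioi hsx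
    (T ×ˢ (W ∩ {x | g (t, x) < a})) (hT.prod hW') ⟨hs, hx⟩
  obtain ⟨A, B, hA, hB, hrA, hrB, hAB⟩ := isOpen_prod_iff.mp hR r1 r2 hr
  have hABs := hAB.trans hRs
  refine ⟨t, ht, B, hB, ⟨r2, hrB⟩, (A, W ∩ {x | g (t, x) < a}), ⟨hA, ⟨r1, hrA⟩, ?_, hW', hxW'⟩,
    ?_, inter_subset_left, ?_, ?_, ?_⟩
  · intro z hz
    exact hTU (hABs (mk_mem_prod hz hrB)).1
  · intro z hz
    exact (hABs (mk_mem_prod hz hrB)).1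
  · intro z hz
    exact (hABs (mk_mem_prod hrA hz)).2
  · intro y hy
    exact le_of_lt hy.2
  · intro z hz y hy
    exact le_of_lt (hRi (mem_image_of_mem g (hAB (mk_mem_prod hz hy))))

theorem strong_quasi_dual {S X : Type*} [TopologicalSpace S] [TopologicalSpace X]
    [CompletelyRegularSpace S] [CompletelyRegularSpace X]
    (hS : IsPseudocompact S) (hX : IsPseudocompact X)
    (g : S × X → ℝ) (hg : SeparatelyContinuous g) (hq : QuasiContinuous g)
    (b : ℝ) (t0 : S) (x0 : X) (hb : b < g (t0, x0))
    (V : Set X) (hV : IsOpen V) (hx0 : x0 ∈ V) :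
    ∃ Y : Set X, IsOpen Y ∧ Y.Nonempty ∧ Y ⊆ V ∧ ∃ U : Set S, IsOpen U ∧ t0 ∈ U ∧
      ∀ y ∈ Y, ∀ t ∈ U, b ≤ g (t, y) := by
  have hsq := strong_quasi hX hS (fun p : X × S => - g (p.2, p.1))
    ⟨fun x => (hg.2 x).neg, fun s => (hg.1 s).neg⟩ ?_ (-b) x0 t0 (by simpa using hb) V hV hx0
  · simpa using hsq
  · rintro ⟨x, s⟩ O hO hxO U hU hxU
    obtain ⟨W, hW, ⟨w, hw⟩, hWU, hWO⟩ := hq (s, x) (Neg.neg ⁻¹' O) (hO.preimage continuous_neg) hxO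
      (Prod.swap ⁻¹' U) (hU.preimage continuous_swap) hxU
    refine ⟨Prod.swap ⁻¹' W, hW.preimage continuous_swap, ⟨w.swap, by simpa using hw⟩, ?_, ?_⟩
    · intro z hz
      simpa using hWU hz
    · rintro _ ⟨z, hz, rfl⟩
      exact hWO (mem_image_of_mem g hz)

theorem cont_at_one {S X : Type*} [Monoid S] [TopologicalSpace S] [TopologicalSpace X]
    [CompletelyRegularSpace S] [CompletelyRegularSpace X]
    (hS_right : ∀ s : S, Continuous fun t : S => s * t)
    (hS : IsPseudocompact S) (hX : IsPseudocompact X)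
    (π : S × X → X)
    (haction : ∀ (s t : S) (x : X), π (s * t, x) = π (s, π (t, x)))
    (hsep : SeparatelyContinuous π) (hqc : QuasiContinuous π) (x0 : X) :
    ContinuousAt π (1, x0) := by
  by_contra hcon
  have h0 : ∃ O : Set X, IsOpen O ∧ π (1, x0) ∈ O ∧ ∀ N : Set S, IsOpen N → 1 ∈ N →
      ∀ W : Set X, IsOpen W → x0 ∈ W → ∃ s ∈ N, ∃ x ∈ W, π (s, x) ∉ O := by
    by_contra hno
    push Not at hno
    apply hcon
    rw [ContinuousAt, tendsto_nhds]
    intro O hO hm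
    obtain ⟨N, hN, h1N, W, hW, hxW, h⟩ := hno O hO hm
    filter_upwards [(hN.prod hW).mem_nhds (mk_mem_prod h1N hxW)] with z hz
    exact h z.1 hz.1 z.2 hz.2
  obtain ⟨O, hO, hpO, hdis⟩ := h0
  obtain ⟨f, hf, hf0, hf1⟩ := CompletelyRegularSpace.completely_regular (π (1, x0)) Oᶜ
    hO.isClosed_compl (by simpa using hpO)
  have hfc : Continuous fun x => (f x : ℝ) := by fun_prop
  set g : S × X → ℝ := fun p => (f (π p) : ℝ) with hgdef
  have hg : SeparatelyContinuous g :=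
    ⟨fun s => hfc.comp (hsep.1 s), fun x => hfc.comp (hsep.2 x)⟩
  have hq : QuasiContinuous g := by
    intro z V hV hz U hU hzU
    obtain ⟨W, hW, hWn, hWU, hWV⟩ := hqc z _ (hV.preimage hfc) hz U hU hzU
    refine ⟨W, hW, hWn, hWU, ?_⟩
    rintro _ ⟨w, hw, rfl⟩
    exact hWV (mem_image_of_mem π hw)
  have hg0 : g (1, x0) = 0 := by simp [hgdef, hf0]
  refine state_false hS hX g hg (1/3) (2/3) (by norm_num)
    (fun p => IsOpen p.1 ∧ 1 ∈ p.1 ∧ IsOpen p.2 ∧ ∃ N : Set S, IsOpen N ∧ 1 ∈ N ∧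
      ∃ W : Set X, IsOpen W ∧ x0 ∈ W ∧ ∀ s ∈ N, ∀ x ∈ W, π (s, x) ∈ p.2)
    (univ, univ) ⟨isOpen_univ, mem_univ _, isOpen_univ, univ, isOpen_univ, mem_univ _,
      univ, isOpen_univ, mem_univ _, fun _ _ _ _ => mem_univ _⟩
    (fun p hp => hp.1) ?_
  rintro ⟨U, Q⟩ ⟨hU, h1U, hQ, N, hN, h1N, W, hW, hxW, hNW⟩
  dsimp only at *
  obtain ⟨T, hT, ⟨t, ht⟩, hTU, W', hW', hxW', hTW⟩ :=
    strong_quasi hS hX g hg hq (1/4) 1 x0 (by rw [hg0]; norm_num) U hU h1U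
  have hN' : IsOpen (N ∩ {s | t * s ∈ T}) := hN.inter (hT.preimage (hS_right t))
  have h1N' : (1 : S) ∈ N ∩ {s | t * s ∈ T} := ⟨h1N, by simpa using ht⟩
  have hQ' : IsOpen (Q ∩ {y | g (t, y) < 1/3}) :=
    hQ.inter (isOpen_lt (hg.1 t) continuous_const)
  have hmap : ∀ s ∈ N ∩ {s | t * s ∈ T}, ∀ x ∈ W ∩ W', π (s, x) ∈ Q ∩ {y | g (t, y) < 1/3} := by
    rintro s ⟨hs, hts⟩ x ⟨hx, hx'⟩
    refine ⟨hNW s hs x hx, ?_⟩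
    have h := hTW (t * s) hts x hx'
    simp only [hgdef, haction] at h
    show (f (π (t, π (s, x))) : ℝ) < 1/3
    linarith
  obtain ⟨s, hs, x, hx, hsx⟩ := hdis _ hN' h1N' _ (hW.inter hW') ⟨hxW, hxW'⟩
  have hg1 : g (1, π (s, x)) = 1 := by
    have h := hf1 hsx
    simp only [hgdef, ← haction, one_mul]
    simp [h]
  obtain ⟨Y, hY, hYn, hYQ, U', hU', h1U', hYU⟩ :=
    strong_quasi_dual hS hX g hg hq (2/3) 1 (π (s, x)) (by rw [hg1]; norm_num) _ hQ'
      (hmap s hs x hx)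
  refine ⟨t, hTU ht, Y, hY, hYn, (U ∩ U', Q ∩ {y | g (t, y) < 1/3}),
    ⟨hU.inter hU', ⟨h1U, h1U'⟩, hQ', _, hN', h1N', _, hW.inter hW', ⟨hxW, hxW'⟩, hmap⟩,
    inter_subset_left, inter_subset_left, hYQ, fun y hy => le_of_lt hy.2, ?_⟩
  intro s hs y hy
  exact hYU y hy s hs.2

theorem lawson_unit_continuity
    {S X : Type*} [Monoid S] [TopologicalSpace S] [TopologicalSpace X]
    [T35Space S] [T35Space X]
    (hS_right : ∀ s : S, Continuous fun t : S => s * t)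
    (hS : IsPseudocompact S) (hX : IsPseudocompact X)
    (π : S × X → X)
    (haction : ∀ (s t : S) (x : X), π (s * t, x) = π (s, π (t, x)))
    (hsep : SeparatelyContinuous π) (hqc : QuasiContinuous π) :
    ∀ u : S, IsUnit u → ∀ x : X, ContinuousAt π (u, x) := by
  rintro _ ⟨u, rfl⟩ x
  have h1 := cont_at_one hS_right hS hX π haction hsep hqc x
  have heq : π = fun p => π ((u : S), π (((u⁻¹ : Sˣ) : S) * p.1, p.2)) := by
    funext p
    rw [← haction]
    simp
  have h2 : ContinuousAt (fun p : S × X => π (((u⁻¹ : Sˣ) : S) * p.1, p.2)) ((u : S), x) := by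
    have hc : Continuous fun p : S × X => (((u⁻¹ : Sˣ) : S) * p.1, p.2) :=
      ((hS_right _).comp continuous_fst).prodMk continuous_snd
    exact ContinuousAt.comp (f := fun p : S × X => (((u⁻¹ : Sˣ) : S) * p.1, p.2))
      (by simpa using h1) hc.continuousAt
  rw [heq]
  exact ContinuousAt.comp (g := fun z => π ((u : S), z)) (hsep.1 (u : S)).continuousAt h2
end

section
/- Let S be a Tychonoff semitopological monoid such that (S, S) is a Grothendieck pair, and let G be a subgroup of S whose identity is the identity 1 of S (that is, a subsemigroup of S containing 1 in which every element has an inverse with respect to 1). Then G, with the subspace topology, is a topological group. -/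
open Filter Topology Set

theorem gp_pseudo {S : Type*} [TopologicalSpace S] [Nonempty S] (hGP : GrothendieckPair S S) :
    IsPseudocompact S := by
  intro f hf
  obtain ⟨s0⟩ := ‹Nonempty S›
  let F : S → Cp S := fun x => ⟨fun _ => f x, continuous_const⟩
  have hF : Continuous F :=
    Continuous.subtype_mk (continuous_pi fun _ => hf) _
  have hK := hGP F hF
  have hev : Continuous (fun k : Cp S => k.1 s0) :=
    (continuous_apply s0).comp continuous_subtype_val
  obtain ⟨M, hM⟩ := (hK.image hev).isBounded.exists_norm_le
  refine ⟨M, fun x => ?_⟩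
  exact hM (f x) ⟨F x, subset_closure ⟨x, rfl⟩, rfl⟩

theorem pseudo_closed_range {S M : Type*} [TopologicalSpace S] [TopologicalSpace M]
    [TopologicalSpace.MetrizableSpace M] (hS : IsPseudocompact S) (H : S → M)
    (hH : Continuous H) : IsClosed (range H) := by
  let := TopologicalSpace.metrizableSpaceMetric M
  refine isClosed_of_closure_subset fun a ha => ?_
  by_contra hna
  have hpos : ∀ s, 0 < dist (H s) a := fun s =>
    dist_pos.2 fun h => hna ⟨s, h⟩
  obtain ⟨B, hB⟩ := hS (fun s => (dist (H s) a)⁻¹)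
    ((hH.dist continuous_const).inv₀ fun s => (hpos s).ne')
  obtain ⟨_, ⟨s, rfl⟩, hs⟩ := Metric.mem_closure_iff.1 ha (|B| + 1)⁻¹ (by positivity)
  have h1 := hB s
  rw [abs_of_pos (inv_pos.2 (hpos s))] at h1
  rw [dist_comm] at hs
  have h2 := (lt_inv_comm₀ (hpos s) (by positivity)).1 hs
  linarith [le_abs_self B]

theorem pseudo_compact_range {S ι : Type*} [Countable ι] [TopologicalSpace S]
    (hS : IsPseudocompact S) (H : S → ι → ℝ) (hH : Continuous H) : IsCompact (range H) := by
  have h1 : ∀ i, ∃ B : ℝ, ∀ x, |H x i| ≤ B := fun i => hS _ ((continuous_apply i).comp hH)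
  choose B hB using h1
  refine (isCompact_univ_pi (fun i => isCompact_Icc (a := -B i) (b := B i))).of_isClosed_subset
    (pseudo_closed_range hS H hH) ?_
  rintro _ ⟨s, rfl⟩ i -
  exact abs_le.1 (hB i s)

theorem unif_cont {S : Type*} [TopologicalSpace S] (hS : IsPseudocompact S)
    (d : ℕ → Cp S) (k : Cp S) (hk : k ∈ closure (range d)) (ε : ℝ) (hε : 0 < ε) :
    ∃ n : ℕ, ∀ t t' : S, (∀ i ≤ n, |(d i).1 t - (d i).1 t'| ≤ 1 / ((n : ℝ) + 1)) →
      |k.1 t - k.1 t'| ≤ ε := by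
  by_contra! hcon
  choose t t' h1 h2 using hcon
  let H : S → Option ℕ → ℝ := fun s o => o.elim (k.1 s) (fun i => (d i).1 s)
  have hH : Continuous H := by
    refine continuous_pi fun o => ?_
    cases o with
    | none => exact k.2
    | some i => exact (d i).2
  have hc := pseudo_compact_range hS H hH
  have hlim : ∀ u : ℕ → S, ∃ s, Tendsto (fun n => H (u n)) (hyperfilter ℕ : Filter ℕ) (𝓝 (H s)) := by
    intro u
    obtain ⟨_, ⟨s, rfl⟩, hs⟩ := hc.ultrafilter_le_nhds ((hyperfilter ℕ).map (fun n => H (u n)))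
      (by
        rw [le_principal_iff]
        exact Filter.mem_map.2 (Filter.univ_mem' fun n => ⟨u n, rfl⟩))
    exact ⟨s, hs⟩
  obtain ⟨s, hs⟩ := hlim t
  obtain ⟨s', hs'⟩ := hlim t'
  rw [tendsto_pi_nhds] at hs hs'
  have hle : (hyperfilter ℕ : Filter ℕ) ≤ atTop := by
    rw [← Nat.cofinite_eq_atTop]; exact hyperfilter_le_cofinite
  have hd : ∀ i, (d i).1 s = (d i).1 s' := by
    intro i
    have a1 := ((hs (some i)).sub (hs' (some i))).abs
    have a2 : Tendsto (fun n : ℕ => 1 / ((n : ℝ) + 1)) (hyperfilter ℕ : Filter ℕ) (𝓝 0) :=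
      tendsto_one_div_add_atTop_nhds_zero_nat.mono_left hle
    have a3 := le_of_tendsto_of_tendsto a1 a2
      (hle (Filter.eventually_atTop.2 ⟨i, fun n hn => h1 n i hn⟩))
    have a4 := abs_nonpos_iff.1 a3
    exact sub_eq_zero.1 a4
  have hks : ε ≤ |k.1 s - k.1 s'| :=
    ge_of_tendsto ((hs none).sub (hs' none)).abs (Filter.Eventually.of_forall fun n => (h2 n).le)
  have hev : ∀ s, Continuous (fun k : Cp S => k.1 s) := fun s =>
    (continuous_apply s).comp continuous_subtype_val
  have hcl : IsClosed {u : Cp S | u.1 s = u.1 s'} :=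
    isClosed_eq (hev s) (hev s')
  have : k.1 s = k.1 s' := closure_minimal (by rintro _ ⟨i, rfl⟩; exact hd i) hcl hk
  rw [this] at hks
  simp at hks
  linarith

theorem fragm {S : Type*} [TopologicalSpace S] [hne : Nonempty S] (hS : IsPseudocompact S)
    (d : ℕ → Cp S) (hK : IsCompact (closure (range d))) (T : Set S)
    (hT : ∀ (s : S) (n : ℕ), ∃ t ∈ T, ∀ i ≤ n, |(d i).1 t - (d i).1 s| ≤ 1 / ((n : ℝ) + 1))
    (ε : ℝ) (hε : 0 < ε) :
    ∃ m : ℕ, ∃ E : Finset S, (E : Set S) ⊆ T ∧ ∃ δ > 0, ∀ m',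
      (∀ e ∈ E, |(d m').1 e - (d m).1 e| < δ) → ∀ s, |(d m').1 s - (d m).1 s| ≤ 3 * ε := by
  classical
  have : T2Space (Cp S) := inferInstanceAs (T2Space {g : S → ℝ // Continuous g})
  let K := closure (range d)
  have : CompactSpace K := isCompact_iff_compactSpace.1 hK
  have : Nonempty K := ⟨⟨d 0, subset_closure ⟨0, rfl⟩⟩⟩
  have hev : ∀ s, Continuous (fun k : K => k.1.1 s) := fun s =>
    (continuous_apply s).comp (continuous_subtype_val.comp continuous_subtype_val)
  let A : ℕ → Set K := fun n => {k | ∀ t t' : S,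
    (∀ i ≤ n, |(d i).1 t - (d i).1 t'| ≤ 1 / ((n : ℝ) + 1)) → |k.1.1 t - k.1.1 t'| ≤ ε}
  have hA : ∀ n, IsClosed (A n) := by
    intro n
    simp only [A, ofPred_forall]
    refine isClosed_iInter fun t => isClosed_iInter fun t' => isClosed_iInter fun _ => ?_
    exact isClosed_le ((hev t).sub (hev t')).abs continuous_const
  have hU : ⋃ n, A n = univ := by
    refine eq_univ_of_forall fun k => mem_iUnion.2 ?_
    exact unif_cont hS d k.1 k.2 ε hε
  obtain ⟨n, hn⟩ := nonempty_interior_of_iUnion_of_closed hA hU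
  -- a member of the dense sequence in the interior
  let d' : ℕ → K := fun m => ⟨d m, subset_closure ⟨m, rfl⟩⟩
  have hdense : DenseRange d' := by
    intro k
    rw [closure_subtype]
    have : Subtype.val '' range d' = range d := by
      rw [← range_comp]; rfl
    rw [this]; exact k.2
  obtain ⟨m, hm⟩ := hdense.exists_mem_open isOpen_interior hn
  -- finitely many centers
  let P : S → Fin (n + 1) → ℝ := fun s i => (d i).1 s
  have hP : Continuous P := continuous_pi fun i => (d i).2
  have htb := (pseudo_compact_range hS P hP).totallyBounded
  obtain ⟨c, hcs, hcf, hcc⟩ := htb.exists_subset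
    (Metric.dist_mem_uniformity (show (0:ℝ) < 1 / ((n : ℝ) + 1) by positivity))
  obtain ⟨J, hJ⟩ : ∃ J : Finset S, ∀ s, ∃ j ∈ J, ∀ i ≤ n, |(d i).1 s - (d i).1 j| ≤ 1 / ((n : ℝ) + 1) := by
    have : Nonempty S := by
      exact hne
    have hcs' : ∀ y : Fin (n + 1) → ℝ, y ∈ c → ∃ s, P s = y := fun y hy => hcs hy
    choose! q hq using hcs'
    refine ⟨hcf.toFinset.image q, fun s => ?_⟩
    have := hcc ⟨s, rfl⟩
    simp only [mem_iUnion] at this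
    obtain ⟨y, hy, hys⟩ := this
    refine ⟨q y, Finset.mem_image_of_mem _ (hcf.mem_toFinset.2 hy), fun i hi => ?_⟩
    have h1 : dist (P s) y < 1 / ((n : ℝ) + 1) := hys
    rw [← hq y hy] at h1
    have := (dist_le_pi_dist (P s) (P (q y)) ⟨i, Nat.lt_succ_of_le hi⟩).trans h1.le
    exact this
  let W : Set K := interior (A n) ∩ ⋂ j ∈ J, {k | |k.1.1 j - (d m).1 j| < ε}
  have hW : IsOpen W := isOpen_interior.inter
    (isOpen_biInter_finset fun j _ => isOpen_lt ((hev j).sub continuous_const).abs continuous_const)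
  have hmW : d' m ∈ W := ⟨hm, by simp [d', hε]⟩
  have hWs : ∀ k ∈ W, ∀ s, |k.1.1 s - (d m).1 s| ≤ 3 * ε := by
    intro k hk s
    obtain ⟨j, hj, hjs⟩ := hJ s
    have b1 := interior_subset hk.1 s j hjs
    have b2 := interior_subset hm s j hjs
    have b3 : |k.1.1 j - (d m).1 j| < ε := mem_iInter₂.1 hk.2 j hj
    have b2' : |(d m).1 s - (d m).1 j| ≤ ε := b2
    rw [abs_le] at *
    rw [abs_lt] at b3
    constructor <;> linarith [b1.1, b1.2, b3.1, b3.2, b2'.1, b2'.2]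
  -- the topology of K is the one of pointwise convergence on T
  let r : K → T → ℝ := fun k t => k.1.1 t
  have hr : Continuous r := continuous_pi fun t => hev t
  have hinj : Function.Injective r := by
    intro k k' hkk
    refine Subtype.ext (Subtype.ext (funext fun s => ?_))
    by_contra hne
    have hpos : 0 < |k.1.1 s - k'.1.1 s| := abs_pos.2 (sub_ne_zero.2 hne)
    set η := |k.1.1 s - k'.1.1 s| with hη
    obtain ⟨n1, hn1⟩ := unif_cont hS d k.1 k.2 (η / 3) (by positivity)
    obtain ⟨n2, hn2⟩ := unif_cont hS d k'.1 k'.2 (η / 3) (by positivity)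
    obtain ⟨t, htT, ht⟩ := hT s (max n1 n2)
    have c1 := hn1 t s fun i hi => (ht i (hi.trans (le_max_left _ _))).trans (by
      gcongr; exact le_max_left _ _)
    have c2 := hn2 t s fun i hi => (ht i (hi.trans (le_max_right _ _))).trans (by
      gcongr; exact le_max_right _ _)
    have c3 : k.1.1 t = k'.1.1 t := congrFun hkk ⟨t, htT⟩
    have c4 : η ≤ |k.1.1 t - k.1.1 s| + |k'.1.1 t - k'.1.1 s| := by
      rw [hη, c3, abs_sub_comm (k'.1.1 t) (k.1.1 s)]
      have := abs_sub_le (k.1.1 s) (k'.1.1 t) (k'.1.1 s)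
      exact this
    linarith
  have hind := (hr.isClosedEmbedding hinj).isInducing
  obtain ⟨O, hO, hOW⟩ := hind.isOpen_iff.1 hW
  have hmO : r (d' m) ∈ O := by rw [← mem_preimage, hOW]; exact hmW
  obtain ⟨I, u, hu, huO⟩ := isOpen_pi_iff.1 hO _ hmO
  have hδ : ∀ t : T, t ∈ I → ∃ δ > 0, Metric.ball (r (d' m) t) δ ⊆ u t := fun t ht =>
    Metric.isOpen_iff.1 (hu t ht).1 _ (hu t ht).2
  choose! δ hδ0 hδ1 using hδ
  obtain ⟨δ0, hδ00, hδ01⟩ : ∃ δ0 > 0, ∀ t ∈ I, δ0 ≤ δ t := by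
    rcases I.eq_empty_or_nonempty with h | h
    · exact ⟨1, one_pos, by simp [h]⟩
    · obtain ⟨i, hi, him⟩ := I.exists_min_image δ h
      exact ⟨δ i, hδ0 i hi, him⟩
  refine ⟨m, I.image Subtype.val, ?_, δ0, hδ00, fun m' hm' => ?_⟩
  · intro x hx
    simp only [Finset.coe_image, mem_image] at hx
    obtain ⟨y, _, rfl⟩ := hx
    exact y.2
  · refine hWs (d' m') ?_
    rw [← hOW]
    refine huO fun t ht => hδ1 t ht ?_
    rw [Metric.mem_ball, Real.dist_eq]
    exact (hm' t (Finset.mem_image_of_mem _ ht)).trans_le (hδ01 t ht)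

theorem close_off {S : Type*} (φ : Finset S → Set S) (hφ : ∀ E, (φ E).Countable) (s0 : S) :
    ∃ C : Set S, C.Countable ∧ s0 ∈ C ∧ ∀ E : Finset S, (E : Set S) ⊆ C → φ E ⊆ C := by
  classical
  let c : ℕ → Set S := fun n => Nat.rec {s0} (fun _ X => X ∪ ⋃ E ∈ {E : Finset S | (E : Set S) ⊆ X}, φ E) n
  have hs : ∀ n, c (n + 1) = c n ∪ ⋃ E ∈ {E : Finset S | (E : Set S) ⊆ c n}, φ E := fun n => rfl
  have hmono : Monotone c := monotone_nat_of_le_succ fun n => by rw [hs]; exact subset_union_left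
  have hcount : ∀ n, (c n).Countable := by
    intro n
    induction n with
    | zero => exact countable_singleton s0
    | succ n ih =>
      rw [hs]
      refine ih.union (Countable.biUnion ?_ fun E _ => hφ E)
      have := countable_ofPred_finite_subset ih
      refine (this.preimage_of_injOn (f := fun E : Finset S => (E : Set S))
        (Finset.coe_injective.injOn)).mono ?_
      intro E hE
      exact ⟨E.finite_toSet, hE⟩
  refine ⟨⋃ n, c n, countable_iUnion hcount, mem_iUnion.2 ⟨0, rfl⟩, fun E hE => ?_⟩
  obtain ⟨n, hn⟩ : ∃ n, (E : Set S) ⊆ c n :=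
    (hmono.directed_le).exists_mem_subset_of_finset_subset_biUnion hE
  refine subset_trans ?_ (subset_iUnion c (n + 1))
  rw [hs]
  exact (subset_biUnion_of_mem (u := fun E => φ E) (show E ∈ {E : Finset S | (E : Set S) ⊆ c n} from hn)).trans subset_union_right

theorem sep_lemma {S ι : Type*} [Finite ι] (P : S → ι → ℝ) :
    ∃ T : Set S, T.Countable ∧ ∀ s, ∀ δ > 0, ∃ t ∈ T, ∀ i, |P t i - P s i| ≤ δ := by
  have := Fintype.ofFinite ι
  let : TopologicalSpace S := TopologicalSpace.induced P inferInstance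
  have : SecondCountableTopology S := TopologicalSpace.secondCountableTopology_induced S (ι → ℝ) P
  obtain ⟨T, hT, hTd⟩ := TopologicalSpace.exists_countable_dense S
  refine ⟨T, hT, fun s δ hδ => ?_⟩
  have hP : Continuous P := continuous_induced_dom
  obtain ⟨t, ht, htT⟩ := hTd.exists_mem_open (Metric.isOpen_ball.preimage hP : IsOpen (P ⁻¹' Metric.ball (P s) δ))
    ⟨s, Metric.mem_ball_self hδ⟩
  refine ⟨t, ‹_›, fun i => ?_⟩
  have h1 : dist (P t) (P s) < δ := by assumption
  exact (dist_le_pi_dist (P t) (P s) i).trans h1.le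

theorem exists_good {S : Type*} [Monoid S] [TopologicalSpace S]
    (hsep : SeparatelyContinuous fun p : S × S => p.1 * p.2)
    (hGP : GrothendieckPair S S) (G : Set S) (hone : (1 : S) ∈ G)
    (f : S → ℝ) (hf : Continuous f) (ε : ℝ) (hε : 0 < ε) :
    ∃ g ∈ G, ∃ E : Finset S, ∃ δ > 0, ∀ h ∈ G, (∀ e ∈ E, |f (h * e) - f (g * e)| < δ) →
      ∀ s, |f (h * s) - f (g * s)| ≤ ε := by
  classical
  by_contra! hcon
  have hδn : ∀ n : ℕ, (0:ℝ) < 1 / ((n : ℝ) + 1) := fun n => by positivity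
  have h2 : ∀ (g : S) (E : Finset S) (n : ℕ), g ∈ G → ∃ h ∈ G,
      (∀ e ∈ E, |f (h * e) - f (g * e)| < 1 / ((n : ℝ) + 1)) ∧ ∃ s, ε < |f (h * s) - f (g * s)| :=
    fun g E n hg => hcon g hg E _ (hδn n)
  choose! h hhG hhE hhs using h2
  have h3 : ∀ E : Finset S, _ := fun E => sep_lemma (fun (s : S) (i : E) => f (i * s))
  choose T hTc hT using h3
  let φ : Finset S → Set S := fun E => T E ∪ ⋃ g ∈ E, range (fun p : ℕ => h g E p)
  obtain ⟨C, hC, hC1, hCφ⟩ := close_off φ (fun E => (hTc E).union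
    (Countable.biUnion E.countable_toSet fun g _ => countable_range _)) 1
  obtain ⟨e, he⟩ := (hC.mono (inter_subset_left : C ∩ G ⊆ C)).exists_eq_range ⟨1, hC1, hone⟩
  have heC : ∀ i, e i ∈ C ∩ G := fun i => he ▸ mem_range_self i
  let F : S → Cp S := fun x => ⟨fun y => f (x * y), hf.comp (hsep.1 x)⟩
  have hF : Continuous F := Continuous.subtype_mk (continuous_pi fun y => hf.comp (hsep.2 y)) _
  have : Nonempty S := ⟨1⟩
  have hS := gp_pseudo hGP
  have hK : IsCompact (closure (range fun i => F (e i))) :=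
    (hGP F hF).of_isClosed_subset isClosed_closure
      (closure_mono (by rintro _ ⟨i, rfl⟩; exact ⟨_, rfl⟩))
  obtain ⟨m, E, hEC, δ, hδ, hm⟩ := fragm hS (fun i => F (e i)) hK C (by
    intro s n
    let E := (Finset.range (n + 1)).image e
    obtain ⟨t, ht, htE⟩ := hT E s _ (hδn n)
    have hE : (E : Set S) ⊆ C := by
      intro x hx
      obtain ⟨i, _, rfl⟩ := Finset.mem_image.1 (Finset.mem_coe.1 hx)
      exact (heC i).1
    refine ⟨t, hCφ E hE (Or.inl ht), fun i hi => ?_⟩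
    exact htE ⟨e i, Finset.mem_image_of_mem _ (Finset.mem_range.2 (Nat.lt_succ_of_le hi))⟩)
    (ε / 3) (by positivity)
  obtain ⟨n, hn⟩ := exists_nat_one_div_lt hδ
  let E' := insert (e m) E
  have hE' : (E' : Set S) ⊆ C := by
    intro x hx
    rcases Finset.mem_insert.1 (Finset.mem_coe.1 hx) with rfl | hx
    · exact (heC m).1
    · exact hEC hx
  have hhC : h (e m) E' n ∈ C := hCφ E' hE' (Or.inr
    (mem_iUnion₂.2 ⟨e m, Finset.mem_insert_self _ _, n, rfl⟩))
  have hhR : h (e m) E' n ∈ range e := he ▸ ⟨hhC, hhG _ _ _ (heC m).2⟩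
  obtain ⟨m', hm'⟩ := hhR
  obtain ⟨s, hs⟩ := hhs (e m) E' n (heC m).2
  have := hm m' (fun x hx => by
    have := hhE (e m) E' n (heC m).2 x (Finset.mem_insert_of_mem hx)
    rw [← hm'] at this
    exact this.trans hn) s
  rw [← hm'] at hs
  have h4 : |f (e m' * s) - f (e m * s)| ≤ 3 * (ε / 3) := this
  linarith

theorem equi_one {S : Type*} [Monoid S] [TopologicalSpace S]
    (hsep : SeparatelyContinuous fun p : S × S => p.1 * p.2)
    (hGP : GrothendieckPair S S) (G : Set S) (hone : (1 : S) ∈ G)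
    (hmulclosed : ∀ a ∈ G, ∀ b ∈ G, a * b ∈ G)
    (hinv : ∀ g ∈ G, ∃ h ∈ G, g * h = 1 ∧ h * g = 1)
    (f : S → ℝ) (hf : Continuous f) (ε : ℝ) (hε : 0 < ε) :
    ∀ᶠ g in 𝓝 (1 : S), g ∈ G → ∀ s, |f (g * s) - f s| ≤ ε := by
  obtain ⟨g0, hg0, E, δ, hδ, hE⟩ := exists_good hsep hGP G hone f hf ε hε
  obtain ⟨k, hk, hk1, hk2⟩ := hinv g0 hg0
  have h1 : ∀ᶠ g in 𝓝 (1 : S), ∀ e ∈ E, |f (g * g0 * e) - f (g0 * e)| < δ := by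
    rw [Filter.eventually_all_finset]
    intro e _
    have hc : Continuous fun g : S => |f (g * g0 * e) - f (g0 * e)| :=
      ((hf.comp ((hsep.2 e).comp (hsep.2 g0))).sub continuous_const).abs
    refine hc.continuousAt.eventually_lt continuousAt_const ?_
    simpa using hδ
  filter_upwards [h1] with g hg hgG s
  have := hE (g * g0) (hmulclosed g hgG g0 hg0) hg (k * s)
  rwa [mul_assoc g, ← mul_assoc g0, hk1, one_mul] at this

theorem cont_of_real {X S : Type*} [TopologicalSpace X] [TopologicalSpace S]
    [CompletelyRegularSpace S] (u : X → S)
    (h : ∀ f : S → ℝ, Continuous f → Continuous fun x => f (u x)) : Continuous u := by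
  rw [continuous_iff_continuousAt]
  intro x V hV
  obtain ⟨O, hOV, hO, hxO⟩ := mem_nhds_iff.1 hV
  obtain ⟨f, hf, hf0, hf1⟩ := CompletelyRegularSpace.completely_regular (u x) Oᶜ
    hO.isClosed_compl (by simpa using hxO)
  have hc := h (fun s => (f s : ℝ)) (continuous_subtype_val.comp hf)
  have := hc.continuousAt.eventually_lt (continuousAt_const (y := (1:ℝ))) (x₀ := x) (by simp [hf0])
  refine Filter.mem_map.2 ?_
  filter_upwards [this] with y hy
  refine hOV ?_
  by_contra hn
  have := hf1 hn
  simp [this] at hy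

theorem subgroup_of_grothendieck_monoid_topological
    {S : Type*} [Monoid S] [TopologicalSpace S] [T35Space S]
    (hsep : SeparatelyContinuous fun p : S × S => p.1 * p.2)
    (hGP : GrothendieckPair S S)
    (G : Set S) (hone : (1 : S) ∈ G)
    (hmulclosed : ∀ a ∈ G, ∀ b ∈ G, a * b ∈ G)
    (hinv : ∀ g ∈ G, ∃ h ∈ G, g * h = 1 ∧ h * g = 1) :
    Continuous (fun p : G × G => (p.1 : S) * (p.2 : S)) ∧
    ∃ inv : G → G, (∀ g : G, (g : S) * (inv g : S) = 1 ∧ (inv g : S) * (g : S) = 1) ∧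
      Continuous inv := by

  choose! i hiG hi1 hi2 using hinv
  have key := equi_one hsep hGP G hone hmulclosed (fun g hg => ⟨i g, hiG g hg, hi1 g hg, hi2 g hg⟩)
  refine ⟨cont_of_real _ fun f hf => ?_, fun g => ⟨i g, hiG g g.2⟩,
    fun g => ⟨hi1 g g.2, hi2 g g.2⟩, Continuous.subtype_mk (cont_of_real _ fun f hf => ?_) _⟩
  · rw [continuous_iff_continuousAt]
    rintro ⟨a, b⟩
    rw [Metric.continuousAt_iff']
    intro ε hε
    have t1 : Tendsto (fun p : G × G => (p.1 : S) * i a) (𝓝 (a, b)) (𝓝 1) := by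
      have : Continuous (fun p : G × G => (p.1 : S) * i a) :=
        (hsep.2 (i a)).comp (continuous_subtype_val.comp continuous_fst)
      have := this.tendsto (a, b)
      simpa only [hi1 a a.2] using this
    have t2 : Continuous (fun p : G × G => f ((a : S) * p.2)) :=
      hf.comp ((hsep.1 a).comp (continuous_subtype_val.comp continuous_snd))
    filter_upwards [t1.eventually (key f hf (ε / 2) (by positivity)),
      Metric.continuousAt_iff'.1 (t2.continuousAt (x := (a, b))) (ε / 2) (by positivity)]
      with p hp1 hp2
    have h1 := hp1 (hmulclosed _ p.1.2 _ (hiG a a.2)) (a * p.2)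
    rw [mul_assoc, ← mul_assoc (i a), hi2 a a.2, one_mul] at h1
    rw [← Real.dist_eq] at h1
    linarith [dist_triangle (f (p.1 * p.2)) (f (a * p.2)) (f (a * b))]
  · rw [continuous_iff_continuousAt]
    intro a
    rw [Metric.continuousAt_iff']
    intro ε hε
    have t1 : Tendsto (fun p : G => i a * (p : S)) (𝓝 a) (𝓝 1) := by
      have : Continuous (fun p : G => i a * (p : S)) :=
        (hsep.1 (i a)).comp continuous_subtype_val
      have := this.tendsto a
      simpa only [hi2 a a.2] using this
    filter_upwards [t1.eventually (key f hf (ε / 2) (by positivity))] with p hp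
    have h1 := hp (hmulclosed _ (hiG a a.2) _ p.2) (i p)
    rw [mul_assoc, hi1 p p.2, mul_one, ← Real.dist_eq, dist_comm] at h1
    linarith
end

section
/- Let (S, •) be a Tychonoff pseudocompact semitopological monoid whose multiplication • : S × S → S is quasicontinuous, and let G be a subgroup of S whose identity is the identity 1 of S (that is, a subsemigroup of S containing 1 in which every element has an inverse with respect to 1). Then G, with the subspace topology, is a topological group. -/
open Filter Topology Set

section Helpers

variable {S : Type*} [TopologicalSpace S]

/-- cluster points of sequences of nonempty open sets -/
def ClusterOf (U : ℕ → Set S) (x : S) : Prop :=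
  ∀ N : Set S, IsOpen N → x ∈ N → ∀ n0 : ℕ, ∃ n, n0 ≤ n ∧ (N ∩ U n).Nonempty

theorem exists_fun_pos [T35Space S] (U : Set S) (hU : IsOpen U) (x : S) (hx : x ∈ U) :
    ∃ φ : C(S, ℝ), φ x = 1 ∧ (∀ y, 0 ≤ φ y) ∧ ∀ y, y ∉ U → φ y = 0 := by
  obtain ⟨g, hg, hgx, hg1⟩ := CompletelyRegularSpace.completely_regular x Uᶜ hU.isClosed_compl
    (by simpa using hx)
  refine ⟨⟨fun y => 1 - (g y : ℝ), by fun_prop⟩, ?_, ?_, ?_⟩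
  · simp [hgx]
  · intro y
    have := (g y).2.2
    simp only [ContinuousMap.coe_mk]; linarith
  · intro y hy
    have : g y = 1 := hg1 hy
    simp [this]

theorem exists_cluster [T35Space S] (hpc : IsPseudocompact S) (U : ℕ → Set S)
    (hU : ∀ n, IsOpen (U n)) (hne : ∀ n, (U n).Nonempty) : ∃ x, ClusterOf U x := by
  by_contra hcon
  simp only [ClusterOf] at hcon
  push Not at hcon
  choose x hx using hne
  choose φ h1 h0 hz using fun n => exists_fun_pos (U n) (hU n) (x n) (hx n)
  have hlf : LocallyFinite fun n : ℕ => Function.support (fun y => (n : ℝ) * φ n y) := by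
    intro z
    obtain ⟨N, hN, hzN, n0, hn⟩ := hcon z
    refine ⟨N, hN.mem_nhds hzN, (Set.finite_lt_nat n0).subset ?_⟩
    rintro n ⟨y, hy1, hy2⟩
    by_contra hlt
    simp only [mem_ofPred_eq, not_lt] at hlt
    have h := hn n hlt
    have hyU : y ∈ U n := by
      by_contra hyU
      apply hy1
      simp [hz n y hyU]
    have : y ∈ N ∩ U n := ⟨hy2, hyU⟩
    simp_all
  have hc : Continuous fun y => ∑ᶠ n : ℕ, (n : ℝ) * φ n y :=
    continuous_finsum (fun n => by fun_prop) hlf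
  obtain ⟨M, hM⟩ := hpc _ hc
  obtain ⟨n, hn⟩ := exists_nat_gt M
  have h2 := hM (x n)
  have h3 : (n : ℝ) * φ n (x n) ≤ ∑ᶠ m : ℕ, (m : ℝ) * φ m (x n) := by
    apply single_le_finsum (f := fun m : ℕ => (m : ℝ) * φ m (x n)) n
    · exact hlf.point_finite (x n)
    · intro m
      have := h0 m (x n)
      positivity
  rw [h1] at h3
  have := le_abs_self (∑ᶠ m : ℕ, (m : ℝ) * φ m (x n))
  linarith

theorem ClusterOf.le {U : ℕ → Set S} {x : S} (h : ClusterOf U x) (g : S → ℝ) (hg : Continuous g)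
    (c : ℝ) (n0 : ℕ) (hc : ∀ n, n0 ≤ n → ∀ u ∈ U n, g u ≤ c) : g x ≤ c := by
  by_contra hlt
  push Not at hlt
  obtain ⟨n, hn, u, hu1, hu2⟩ := h {z | c < g z} (isOpen_lt continuous_const hg) hlt n0
  have := hc n hn u hu2
  simp only [mem_ofPred_eq] at hu1
  linarith

theorem ClusterOf.ge {U : ℕ → Set S} {x : S} (h : ClusterOf U x) (g : S → ℝ) (hg : Continuous g)
    (c : ℝ) (n0 : ℕ) (hc : ∀ n, n0 ≤ n → ∀ u ∈ U n, c ≤ g u) : c ≤ g x := by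
  have := h.le (fun y => - g y) hg.neg (-c) n0 (fun n hn u hu => by have := hc n hn u hu; linarith)
  linarith

theorem closing {T : Type*} (w : List T → Set T) (hw : ∀ l, (w l).Countable) (C0 : Set T)
    (hC0 : C0.Countable) :
    ∃ C : Set T, C0 ⊆ C ∧ C.Countable ∧ ∀ l : List T, (∀ t ∈ l, t ∈ C) → w l ⊆ C := by
  let st : Set T → Set T := fun C => C ∪ ⋃ l : List C, w (l.map Subtype.val)
  let s : ℕ → Set T := fun n => st^[n] C0
  have hs : ∀ n, s (n+1) = st (s n) := fun n => Function.iterate_succ_apply' _ _ _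
  have hcount : ∀ n, (s n).Countable := by
    intro n
    induction n with
    | zero => exact hC0
    | succ n ih =>
      rw [hs]
      have : Countable (s n) := ih
      exact ih.union (Set.countable_iUnion fun l => hw _)
  have hmono : Monotone s := monotone_nat_of_le_succ (fun n => by
    rw [hs]; exact subset_union_left)
  refine ⟨⋃ n, s n, subset_iUnion s 0, Set.countable_iUnion hcount, ?_⟩
  intro l hl
  have : ∃ n, ∀ t ∈ l, t ∈ s n := by
    induction l with
    | nil => exact ⟨0, by simp⟩
    | cons a l ih =>
      obtain ⟨n, hn⟩ := ih (fun t ht => hl t (List.mem_cons_of_mem _ ht))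
      obtain ⟨m, hm⟩ := mem_iUnion.1 (hl a List.mem_cons_self)
      refine ⟨max n m, ?_⟩
      intro t ht
      rcases List.mem_cons.1 ht with rfl | ht
      · exact hmono (le_max_right _ _) hm
      · exact hmono (le_max_left _ _) (hn t ht)
  obtain ⟨n, hn⟩ := this
  refine subset_trans ?_ (subset_iUnion s (n+1))
  rw [hs]
  refine subset_trans ?_ subset_union_right
  lift l to List (s n) using hn
  exact subset_iUnion (fun l : List (s n) => w (l.map Subtype.val)) l

theorem closing2 {T : Type*} (w : T → T → Set T) (hw : ∀ a b, (w a b).Countable) (C0 : Set T)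
    (hC0 : C0.Countable) :
    ∃ C : Set T, C0 ⊆ C ∧ C.Countable ∧ ∀ a ∈ C, ∀ b ∈ C, w a b ⊆ C := by
  obtain ⟨C, h1, h2, h3⟩ := closing (fun l => ⋃ a : {a // a ∈ l}, ⋃ b : {b // b ∈ l}, w a b)
    (fun l => by
      have : Countable {a // a ∈ l} := (List.finite_toSet l).countable
      exact Set.countable_iUnion fun a => Set.countable_iUnion fun b => hw _ _) C0 hC0
  refine ⟨C, h1, h2, fun a ha b hb => ?_⟩
  refine subset_trans ?_ (h3 [a, b] (by simp [ha, hb]))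
  intro t ht
  simp only [mem_iUnion]
  exact ⟨⟨a, by simp⟩, ⟨b, by simp⟩, ht⟩

theorem compact_range (hpc : IsPseudocompact S) (ψ : ℕ → C(S, ℝ)) :
    IsCompact (Set.range fun (x : S) (i : ℕ) => ψ i x) := by
  have hcont : Continuous fun (x : S) (i : ℕ) => ψ i x := by fun_prop
  choose M hM using fun i => hpc (ψ i) (ψ i).continuous
  have hK : IsCompact (Set.univ.pi fun i => Set.Icc (-M i) (M i)) :=
    isCompact_univ_pi fun i => isCompact_Icc
  refine hK.of_isClosed_subset ?_ ?_
  · let _ := TopologicalSpace.metrizableSpaceMetric (ℕ → ℝ)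
    refine isClosed_of_closure_subset ?_
    intro p hp
    by_contra hpn
    have hd : ∀ x : S, 0 < dist (fun i => ψ i x) p := by
      intro x
      rw [dist_pos]
      rintro rfl
      exact hpn ⟨x, rfl⟩
    obtain ⟨B, hB⟩ := hpc (fun x => (dist (fun i => ψ i x) p)⁻¹)
      ((hcont.dist continuous_const).inv₀ (fun x => (hd x).ne'))
    have hB1 : 0 < |B| + 1 := by positivity
    obtain ⟨_, ⟨x, rfl⟩, hx⟩ := Metric.mem_closure_iff.1 hp (|B| + 1)⁻¹ (by positivity)
    rw [dist_comm] at hx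
    have h1 := hB x
    rw [abs_of_pos (inv_pos.2 (hd x))] at h1
    have h2 := (lt_inv_comm₀ (hd x) hB1).1 hx
    have := le_abs_self B
    linarith
  · rintro _ ⟨x, rfl⟩ i -
    exact abs_le.1 (hM i x)

theorem factor (hpc : IsPseudocompact S) (ψ : ℕ → C(S, ℝ)) (p : S → ℝ) (hp : Continuous p)
    (hfib : ∀ x y, (∀ i, ψ i x = ψ i y) → p x = p y) :
    ∃ h : C(Set.range fun (x : S) (i : ℕ) => ψ i x, ℝ), ∀ x, p x = h ⟨_, x, rfl⟩ := by
  let h0 : (Set.range fun (x : S) (i : ℕ) => ψ i x) → ℝ := fun l => p l.2.choose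
  have hh0 : ∀ x, p x = h0 ⟨_, x, rfl⟩ := by
    intro x
    apply hfib
    intro i
    have := (⟨x, rfl⟩ : (fun i => ψ i x) ∈ Set.range fun (x : S) (i : ℕ) => ψ i x).choose_spec
    exact (congrFun this i).symm
  refine ⟨⟨h0, ?_⟩, hh0⟩
  rw [continuous_iff_isClosed]
  intro Z hZ
  let ψ' : ℕ → C(S, ℝ) := fun n => n.casesOn ⟨p, hp⟩ ψ
  have hK := compact_range hpc ψ'
  have hK2 := hK.inter_right (hZ.preimage (continuous_apply 0 : Continuous fun k : ℕ → ℝ => k 0))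
  have hK3 := (hK2.image (by fun_prop : Continuous fun (k : ℕ → ℝ) (i : ℕ) => k (i+1))).isClosed
  convert hK3.preimage continuous_subtype_val using 1
  ext ⟨_, x, rfl⟩
  simp only [mem_preimage, mem_image, ← hh0]
  constructor
  · intro hx
    exact ⟨fun i => ψ' i x, ⟨⟨x, rfl⟩, hx⟩, rfl⟩
  · rintro ⟨_, ⟨⟨z, rfl⟩, hz⟩, he⟩
    have : p z = p x := hfib _ _ (fun i => congrFun he i)
    rw [← this]
    exact hz

/-- quasicontinuity of a real function of two variables -/
def QC (f : S → S → ℝ) : Prop :=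
  ∀ x y : S, ∀ ε : ℝ, 0 < ε → ∀ U V : Set S, IsOpen U → IsOpen V → x ∈ U → y ∈ V →
    ∃ U' V' : Set S, IsOpen U' ∧ IsOpen V' ∧ U'.Nonempty ∧ V'.Nonempty ∧ U' ⊆ U ∧ V' ⊆ V ∧
      ∀ u ∈ U', ∀ v ∈ V', |f u v - f x y| < ε

theorem pos_open (φ : C(S, ℝ)) : IsOpen {x | 0 < φ x} := isOpen_lt continuous_const φ.continuous

theorem exists_pos [T35Space S] (U : Set S) (hU : IsOpen U) (hne : U.Nonempty) :
    ∃ φ : C(S, ℝ), (∃ x, 0 < φ x) ∧ ∀ y, 0 < φ y → y ∈ U := by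
  obtain ⟨x, hx⟩ := hne
  obtain ⟨φ, h1, h2, h3⟩ := exists_fun_pos U hU x hx
  refine ⟨φ, ⟨x, by rw [h1]; norm_num⟩, fun y hy => ?_⟩
  by_contra hyU
  rw [h3 y hyU] at hy
  exact lt_irrefl _ hy

theorem gap_triple (f : S → S → ℝ) (h1 : ∀ x, Continuous (f x)) (hq : QC f) (ε : ℝ) (U : Set S)
    (hU : IsOpen U) (u u' y : S) (hu : u ∈ U) (hu' : u' ∈ U) (hg : ε < |f u y - f u' y|) :
    ∃ U1 U2 V : Set S, IsOpen U1 ∧ IsOpen U2 ∧ IsOpen V ∧ U1.Nonempty ∧ U2.Nonempty ∧ V.Nonempty ∧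
      U1 ⊆ U ∧ U2 ⊆ U ∧ ∀ a ∈ U1, ∀ b ∈ U2, ∀ v ∈ V, ε < |f a v - f b v| := by
  obtain ⟨δ, hδ, hδ2⟩ : ∃ δ > 0, |f u y - f u' y| = ε + 4 * δ :=
    ⟨(|f u y - f u' y| - ε) / 4, by linarith, by ring⟩
  obtain ⟨A, B, hA, hB, hAn, ⟨b, hb⟩, hAU, hBV, hAB⟩ := hq u y δ hδ U {v | |f u' v - f u' y| < δ} hU
    (isOpen_lt (by have := h1 u'; fun_prop) continuous_const) hu (by simpa using hδ)
  obtain ⟨A', B', hA', hB', hAn', hBn', hAU', hBV', hAB'⟩ := hq u' b δ hδ U B hU hB hu' hb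
  refine ⟨A, A', B', hA, hA', hB', hAn, hAn', hBn', hAU, hAU', ?_⟩
  intro a ha a' ha' v hv
  have e1 := hAB a ha v (hBV' hv)
  have e2 := hAB' a' ha' v hv
  have e3 : |f u' b - f u' y| < δ := hBV hb
  have t1 := abs_sub_le (f u y) (f a v) (f u' y)
  have t2 := abs_sub_le (f a v) (f a' v) (f u' y)
  have t3 := abs_sub_le (f a' v) (f u' b) (f u' y)
  have t4 := abs_sub_comm (f u y) (f a v)
  linarith

end Helpers
section Osc

variable {S : Type*} [TopologicalSpace S]

/-- closure properties of a sequence of functions -/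
structure Good (ψ : ℕ → C(S, ℝ)) : Prop where
  inf : ∀ i j, ∃ k, ψ k = ψ i ⊓ ψ j
  sub : ∀ i (q : ℚ), ∃ k, ∀ x, ψ k x = ψ i x - q
  rsub : ∀ i (q : ℚ), ∃ k, ∀ x, ψ k x = q - ψ i x

theorem Good.pos_inf {ψ : ℕ → C(S, ℝ)} (h : Good ψ) (i j : ℕ) :
    ∃ k, ∀ x, 0 < ψ k x ↔ 0 < ψ i x ∧ 0 < ψ j x := by
  obtain ⟨k, hk⟩ := h.inf i j
  exact ⟨k, fun x => by rw [hk]; simp⟩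

theorem Good.single {ψ : ℕ → C(S, ℝ)} (h : Good ψ) (x : S) (i : ℕ) (r : ℝ) (hr : 0 < r) :
    ∃ k, 0 < ψ k x ∧ ∀ v, 0 < ψ k v → |ψ i v - ψ i x| < r := by
  obtain ⟨q1, h1, h2⟩ := exists_rat_btwn (show ψ i x - r < ψ i x by linarith)
  obtain ⟨q2, h3, h4⟩ := exists_rat_btwn (show ψ i x < ψ i x + r by linarith)
  obtain ⟨a, ha⟩ := h.sub i q1
  obtain ⟨b, hb⟩ := h.rsub i q2
  obtain ⟨k, hk⟩ := h.pos_inf a b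
  refine ⟨k, ?_, ?_⟩
  · rw [hk, ha, hb]; constructor <;> linarith
  · intro v hv
    rw [hk, ha, hb] at hv
    rw [abs_lt]; constructor <;> linarith [hv.1, hv.2]

theorem Good.multi {ψ : ℕ → C(S, ℝ)} (h : Good ψ) (x : S) (r : ℝ) (hr : 0 < r) (m : ℕ) :
    ∃ k, 0 < ψ k x ∧ ∀ v, 0 < ψ k v → ∀ i ≤ m, |ψ i v - ψ i x| < r := by
  induction m with
  | zero =>
    obtain ⟨k, h1, h2⟩ := h.single x 0 r hr
    refine ⟨k, h1, fun v hv i hi => ?_⟩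
    obtain rfl : i = 0 := by omega
    exact h2 v hv
  | succ m ih =>
    obtain ⟨k1, h1, h2⟩ := ih
    obtain ⟨k2, h3, h4⟩ := h.single x (m+1) r hr
    obtain ⟨k, hk⟩ := h.pos_inf k1 k2
    refine ⟨k, (hk x).2 ⟨h1, h3⟩, fun v hv i hi => ?_⟩
    rcases Nat.le_succ_iff.1 hi with hi | rfl
    · exact h2 v ((hk v).1 hv).1 i hi
    · exact h4 v ((hk v).1 hv).2

theorem Good.basis {ψ : ℕ → C(S, ℝ)} (h : Good ψ) (x : S) :
    ∃ θ : ℕ → ℕ, ∀ n, 0 < ψ (θ n) x ∧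
      ∀ v, 0 < ψ (θ n) v → ∀ i ≤ n, |ψ i v - ψ i x| < 1 / ((n : ℝ) + 1) := by
  choose θ h1 h2 using fun n : ℕ => h.multi x (1 / ((n : ℝ) + 1)) (by positivity) n
  exact ⟨θ, fun n => ⟨h1 n, h2 n⟩⟩

theorem indist {ψ : ℕ → C(S, ℝ)} {x : S} {Z : ℕ → Set S}
    (hZ : ∀ n, ∀ v ∈ Z n, ∀ i ≤ n, |ψ i v - ψ i x| < 1 / ((n : ℝ) + 1)) {u : S}
    (hu : ClusterOf Z u) (i : ℕ) : ψ i u = ψ i x := by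
  have : |ψ i u - ψ i x| ≤ 0 := by
    apply le_of_forall_pos_le_add
    intro r hr
    obtain ⟨m, hm⟩ := exists_nat_one_div_lt hr
    refine hu.le (fun u => |ψ i u - ψ i x|) (by fun_prop) _ (max m i) ?_
    intro n hn v hv
    have h1 := hZ n v hv i (le_trans (le_max_right _ _) hn)
    have h2 : 1 / ((n : ℝ) + 1) ≤ 1 / ((m : ℝ) + 1) := by
      have : (m : ℝ) ≤ n := by exact_mod_cast le_trans (le_max_left _ _) hn
      gcongr
    linarith
  have := abs_nonpos_iff.1 this
  linarith

theorem Good.nbhd {ψ : ℕ → C(S, ℝ)} (h : Good ψ) (x : S) (O : Set (ℕ → ℝ)) (hO : O ∈ 𝓝 (fun i => ψ i x)) :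
    ∃ k, 0 < ψ k x ∧ ∀ v, 0 < ψ k v → (fun i => ψ i v) ∈ O := by
  obtain ⟨θ, hθ⟩ := h.basis x
  by_contra hcon
  push Not at hcon
  choose v hv hvO using fun n => hcon (θ n) (hθ n).1
  have : Tendsto (fun n => fun i => ψ i (v n)) atTop (𝓝 (fun i => ψ i x)) := by
    rw [tendsto_pi_nhds]
    intro i
    rw [tendsto_iff_dist_tendsto_zero]
    refine squeeze_zero' (Eventually.of_forall fun n => dist_nonneg) ?_
      (tendsto_one_div_add_atTop_nhds_zero_nat (𝕜 := ℝ))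
    filter_upwards [eventually_ge_atTop i] with n hn
    exact ((hθ n).2 (v n) (hv n) i hn).le
  obtain ⟨n, hn⟩ := (this.eventually hO).exists
  exact hvO n hn

/-- small box -/
def Box (f : S → S → ℝ) (δ : ℝ) (φ χ : C(S, ℝ)) : Prop :=
  ∀ u u' v v', 0 < φ u → 0 < φ u' → 0 < χ v → 0 < χ v' → |f u v - f u' v'| ≤ δ

/-- points `v` such that `(x, v)` lies in a small box -/
def EE (f : S → S → ℝ) (δ : ℝ) (ψ : ℕ → C(S, ℝ)) (x : S) : Set S :=
  {v | ∃ i j, Box f δ (ψ i) (ψ j) ∧ 0 < ψ i x ∧ 0 < ψ j v}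

theorem local_code [T35Space S] (hpc : IsPseudocompact S) (f : S → S → ℝ)
    (h1 : ∀ x, Continuous (f x)) (h2 : ∀ y, Continuous fun x => f x y) (δ : ℝ) (hδ : 0 < δ)
    (ψ : ℕ → C(S, ℝ)) (hψ : Good ψ)
    (hA : ∀ i, (∃ x, 0 < ψ i x) → ∃ a, 0 < ψ i a ∧ ∃ j, ∀ y, ψ j y = f a y)
    (x y : S) : ∃ k, 0 < ψ k y ∧ ∃ q : ℚ, ∀ v ∈ EE f δ ψ x, 0 < ψ k v → |f x v - q| ≤ 6 * δ := by
  by_contra hcon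
  push Not at hcon
  obtain ⟨θ, hθ⟩ := hψ.basis y
  obtain ⟨η, hη⟩ := hψ.basis x
  -- key: from points in EE near y get a cluster
  have key : ∀ w : ℕ → S, (∀ n, w n ∈ EE f δ ψ x) → (∀ n, 0 < ψ (θ n) (w n)) →
      ∃ (y' : S) (V : ℕ → Set S), ClusterOf V y' ∧ (∀ i, ψ i y' = ψ i y) ∧
        (∀ n, ∀ v ∈ V n, |f x v - f x (w n)| ≤ δ) ∧
        (∀ u, (∀ i, ψ i u = ψ i x) → |f u y' - f x y'| ≤ δ) := by
    intro w hw hwθ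
    choose i j hbox hi hj using hw
    let V : ℕ → Set S := fun n => {v | 0 < ψ (θ n) v} ∩ {v | 0 < ψ (j n) v}
    obtain ⟨y', hy'⟩ := exists_cluster hpc V (fun n => (pos_open _).inter (pos_open _))
      (fun n => ⟨w n, hwθ n, hj n⟩)
    refine ⟨y', V, hy', ?_, ?_, ?_⟩
    · exact indist (fun n v hv => (hθ n).2 v hv.1) hy'
    · intro n v hv
      exact hbox n _ _ _ _ (hi n) (hi n) hv.2 (hj n)
    · intro u hu
      refine hy'.le (fun z => |f u z - f x z|) (by have := h1 u; have := h1 x; fun_prop) _ 0 ?_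
      intro n _ v hv
      exact hbox n _ _ _ _ (by rw [hu]; exact hi n) (hi n) hv.2 hv.2
  obtain ⟨w, hw⟩ : ∃ w : ℕ → S, ∀ n, w n ∈ EE f δ ψ x ∧ 0 < ψ (θ n) (w n) := by
    choose w a b c using fun n => hcon (θ n) (hθ n).1 0
    exact ⟨w, fun n => ⟨a n, b n⟩⟩
  obtain ⟨y', -, -, hy1, -, hy2⟩ := key w (fun n => (hw n).1) (fun n => (hw n).2)
  obtain ⟨q, hq1, hq2⟩ := exists_rat_btwn (show f x y' < f x y' + δ by linarith)
  choose w' hw1 hw2 hw3 using fun n => hcon (θ n) (hθ n).1 q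
  obtain ⟨y'', V, hV, hz1, hz3, hz2⟩ := key w' hw1 hw2
  have hfar : 5 * δ ≤ |f x y'' - q| := by
    refine hV.ge (fun z => |f x z - q|) (by have := h1 x; fun_prop) _ 0 ?_
    intro n _ v hv
    have e1 := hz3 n v hv
    have e2 := hw3 n
    have e3 := abs_sub_le (f x (w' n)) (f x v) q
    have e4 := abs_sub_comm (f x (w' n)) (f x v)
    linarith
  have hfar2 : ∀ u, (∀ i, ψ i u = ψ i x) → 2 * δ ≤ |f u y' - f u y''| := by
    intro u hu
    have e1 := hy2 u hu
    have e2 := hz2 u hu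
    have e3 := abs_sub_le (f x y'') (f u y'') q
    have e4 := abs_sub_le (f u y'') (f u y') q
    have e5 := abs_sub_le (f u y') (f x y') q
    have e6 := abs_sub_comm (f x y'') (f u y'')
    have e7 := abs_sub_comm (f u y'') (f u y')
    have e8 : |f x y' - q| ≤ δ := by rw [abs_le]; constructor <;> linarith
    linarith
  let Z : ℕ → Set S := fun n => {u | 0 < ψ (η n) u} ∩ {u | |f u y' - f u y''| < δ}
  obtain ⟨u, hu⟩ := exists_cluster hpc Z
    (fun n => (pos_open _).inter (isOpen_lt (by have := h2 y'; have := h2 y''; fun_prop)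
      continuous_const))
    (fun n => by
      obtain ⟨a, ha, j, hj⟩ := hA (η n) ⟨x, (hη n).1⟩
      refine ⟨a, ha, ?_⟩
      have : f a y' = f a y'' := by rw [← hj, ← hj, hy1, hz1]
      simpa [this] using hδ)
  have e1 := hfar2 u (indist (fun n v hv => (hη n).2 v hv.1) hu)
  have e2 := hu.le (fun u => |f u y' - f u y''|) (by have := h2 y'; have := h2 y''; fun_prop) δ 0
    (fun n _ v hv => le_of_lt hv.2)
  linarith

theorem exists_good_s16 [T35Space S] (f : S → S → ℝ)
    (h1 : ∀ x, Continuous (f x)) (hq : QC f) (δ ε : ℝ) (hδ : 0 < δ) (U0 : Set S) (hU0 : IsOpen U0)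
    (hne : U0.Nonempty)
    (hgap : ∀ U ⊆ U0, IsOpen U → U.Nonempty → ∃ u ∈ U, ∃ u' ∈ U, ∃ y, ε < |f u y - f u' y|) :
    ∃ ψ : ℕ → C(S, ℝ), Good ψ ∧
      (∀ i, (∃ x, 0 < ψ i x) → ∃ a, 0 < ψ i a ∧ ∃ j, ∀ y, ψ j y = f a y) ∧
      (∃ i, (∃ x, 0 < ψ i x) ∧ ∀ x, 0 < ψ i x → x ∈ U0) ∧
      (∀ i j, (∃ x, 0 < ψ i x) → (∃ x, 0 < ψ j x) → ∃ i' j', (∃ x, 0 < ψ i' x) ∧ (∃ x, 0 < ψ j' x) ∧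
        (∀ x, 0 < ψ i' x → 0 < ψ i x) ∧ (∀ x, 0 < ψ j' x → 0 < ψ j x) ∧ Box f δ (ψ i') (ψ j')) ∧
      (∀ i, (∃ x, 0 < ψ i x) → (∀ x, 0 < ψ i x → x ∈ U0) → ∃ i1 i2 j, (∃ x, 0 < ψ i1 x) ∧
        (∃ x, 0 < ψ i2 x) ∧ (∃ x, 0 < ψ j x) ∧ (∀ x, 0 < ψ i1 x → 0 < ψ i x) ∧
        (∀ x, 0 < ψ i2 x → 0 < ψ i x) ∧
        ∀ a b v, 0 < ψ i1 a → 0 < ψ i2 b → 0 < ψ j v → ε < |f a v - f b v|) := by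
  have A1 : ∀ φ : C(S, ℝ), ∃ t : Set C(S, ℝ), t.Countable ∧ ((∃ x, 0 < φ x) → ∃ a, 0 < φ a ∧
      ∃ χ ∈ t, ∀ y, χ y = f a y) := by
    intro φ
    by_cases hφ : ∃ x, 0 < φ x
    · obtain ⟨a, ha⟩ := hφ
      exact ⟨{⟨f a, h1 a⟩}, countable_singleton _, fun _ => ⟨a, ha, _, rfl, fun _ => rfl⟩⟩
    · exact ⟨∅, countable_empty, fun h => absurd h hφ⟩
  have A2 : ∀ φ χ : C(S, ℝ), ∃ t : Set C(S, ℝ), t.Countable ∧ ((∃ x, 0 < φ x) → (∃ x, 0 < χ x) →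
      ∃ φ' ∈ t, ∃ χ' ∈ t, (∃ x, 0 < φ' x) ∧ (∃ x, 0 < χ' x) ∧
        (∀ x, 0 < φ' x → 0 < φ x) ∧ (∀ x, 0 < χ' x → 0 < χ x) ∧ Box f δ φ' χ') := by
    intro φ χ
    by_cases hφ : (∃ x, 0 < φ x) ∧ (∃ x, 0 < χ x)
    · obtain ⟨⟨x, hx⟩, ⟨y, hy⟩⟩ := hφ
      obtain ⟨U, V, hU, hV, hUn, hVn, hUs, hVs, hb⟩ := hq x y (δ / 2) (by linarith) _ _ (pos_open φ)
        (pos_open χ) hx hy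
      obtain ⟨φ', a1, a2⟩ := exists_pos U hU hUn
      obtain ⟨χ', b1, b2⟩ := exists_pos V hV hVn
      refine ⟨{φ', χ'}, (Set.toFinite _).countable, fun _ _ => ⟨φ', by simp, χ', by simp, a1, b1,
        fun x hx => hUs (a2 x hx), fun x hx => hVs (b2 x hx), ?_⟩⟩
      intro u u' v v' e1 e2 e3 e4
      have c1 := hb u (a2 _ e1) v (b2 _ e3)
      have c2 := hb u' (a2 _ e2) v' (b2 _ e4)
      have := abs_sub_le (f u v) (f x y) (f u' v')
      have := abs_sub_comm (f x y) (f u' v')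
      linarith
    · exact ⟨∅, countable_empty, fun h h' => absurd ⟨h, h'⟩ hφ⟩
  have A3 : ∀ φ : C(S, ℝ), ∃ t : Set C(S, ℝ), t.Countable ∧ ((∃ x, 0 < φ x) →
      (∀ x, 0 < φ x → x ∈ U0) → ∃ φ1 ∈ t, ∃ φ2 ∈ t, ∃ χ ∈ t, (∃ x, 0 < φ1 x) ∧
        (∃ x, 0 < φ2 x) ∧ (∃ x, 0 < χ x) ∧ (∀ x, 0 < φ1 x → 0 < φ x) ∧
        (∀ x, 0 < φ2 x → 0 < φ x) ∧
        ∀ a b v, 0 < φ1 a → 0 < φ2 b → 0 < χ v → ε < |f a v - f b v|) := by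
    intro φ
    by_cases hφ : (∃ x, 0 < φ x) ∧ (∀ x, 0 < φ x → x ∈ U0)
    · obtain ⟨hx, hs⟩ := hφ
      obtain ⟨u, hu, u', hu', y, hy⟩ := hgap {x | 0 < φ x} hs (pos_open φ) hx
      obtain ⟨U1, U2, V, o1, o2, o3, n1, n2, n3, s1, s2, hg⟩ := gap_triple f h1 hq ε _ (pos_open φ)
        u u' y hu hu' hy
      obtain ⟨φ1, a1, a2⟩ := exists_pos U1 o1 n1
      obtain ⟨φ2, b1, b2⟩ := exists_pos U2 o2 n2
      obtain ⟨χ, c1, c2⟩ := exists_pos V o3 n3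
      exact ⟨{φ1, φ2, χ}, (Set.toFinite _).countable, fun _ _ => ⟨φ1, by simp, φ2, by simp, χ,
        by simp, a1, b1, c1, fun x hx => s1 (a2 x hx), fun x hx => s2 (b2 x hx),
        fun a b v ha hb hv => hg a (a2 _ ha) b (b2 _ hb) v (c2 _ hv)⟩⟩
    · exact ⟨∅, countable_empty, fun h h' => absurd ⟨h, h'⟩ hφ⟩
  choose t1 c1 p1 using A1
  choose t2 c2 p2 using A2
  choose t3 c3 p3 using A3
  obtain ⟨φ0, d1, d2⟩ := exists_pos U0 hU0 hne
  let t4 : C(S, ℝ) → Set C(S, ℝ) := fun φ => range fun q : ℚ => φ - ContinuousMap.const S (q : ℝ)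
  let t5 : C(S, ℝ) → Set C(S, ℝ) := fun φ => range fun q : ℚ => ContinuousMap.const S (q : ℝ) - φ
  obtain ⟨C, hC0, hCc, hC⟩ := closing2
    (fun φ χ => t1 φ ∪ (t2 φ χ ∪ (t3 φ ∪ (t4 φ ∪ (t5 φ ∪ {φ ⊓ χ})))))
    (fun φ χ => (c1 _).union ((c2 _ _).union ((c3 _).union ((countable_range _).union
      ((countable_range _).union (countable_singleton _)))))) {φ0} (countable_singleton _)
  simp only [union_subset_iff] at hC
  obtain ⟨ψ, rfl⟩ := hCc.exists_eq_range ⟨φ0, hC0 rfl⟩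
  have m : ∀ i, ψ i ∈ range ψ := fun i => mem_range_self i
  refine ⟨ψ, ⟨?_, ?_, ?_⟩, ?_, ?_, ?_, ?_⟩
  · intro i j
    exact (hC _ (m i) _ (m j)).2.2.2.2.2 rfl
  · intro i q
    obtain ⟨k, hk⟩ := (hC _ (m i) _ (m i)).2.2.2.1 ⟨q, rfl⟩
    exact ⟨k, fun x => by rw [hk]; simp⟩
  · intro i q
    obtain ⟨k, hk⟩ := (hC _ (m i) _ (m i)).2.2.2.2.1 ⟨q, rfl⟩
    exact ⟨k, fun x => by rw [hk]; simp⟩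
  · intro i hi
    obtain ⟨a, ha, χ, hχ, h⟩ := p1 (ψ i) hi
    obtain ⟨k, rfl⟩ := (hC _ (m i) _ (m i)).1 hχ
    exact ⟨a, ha, k, h⟩
  · obtain ⟨k, hk⟩ := hC0 rfl
    exact ⟨k, by rw [hk]; exact ⟨d1, d2⟩⟩
  · intro i j hi hj
    obtain ⟨φ, hφ, χ, hχ, h⟩ := p2 (ψ i) (ψ j) hi hj
    obtain ⟨k, rfl⟩ := (hC _ (m i) _ (m j)).2.1 hφ
    obtain ⟨l, rfl⟩ := (hC _ (m i) _ (m j)).2.1 hχ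
    exact ⟨k, l, h⟩
  · intro i hi hi'
    obtain ⟨φ, hφ, φ', hφ', χ, hχ, h⟩ := p3 (ψ i) hi hi'
    obtain ⟨k, rfl⟩ := (hC _ (m i) _ (m i)).2.2.1 hφ
    obtain ⟨k', rfl⟩ := (hC _ (m i) _ (m i)).2.2.1 hφ'
    obtain ⟨l, rfl⟩ := (hC _ (m i) _ (m i)).2.2.1 hχ
    exact ⟨k, k', l, h⟩

theorem small_osc [T35Space S] (hpc : IsPseudocompact S) (f : S → S → ℝ)
    (h1 : ∀ x, Continuous (f x)) (h2 : ∀ y, Continuous fun x => f x y) (hq : QC f)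
    (ε : ℝ) (hε : 0 < ε) (U0 : Set S) (hU0 : IsOpen U0) (hne : U0.Nonempty) :
    ∃ U ⊆ U0, IsOpen U ∧ U.Nonempty ∧ ∀ u ∈ U, ∀ u' ∈ U, ∀ y, |f u y - f u' y| ≤ ε := by
  by_contra hcon
  have hgap : ∀ U ⊆ U0, IsOpen U → U.Nonempty →
      ∃ u ∈ U, ∃ u' ∈ U, ∃ y, ε < |f u y - f u' y| := by
    intro U a b c
    by_contra h
    push Not at h
    exact hcon ⟨U, a, b, c, h⟩
  set δ := ε / 12 with hδ
  have hδ0 : 0 < δ := by positivity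
  obtain ⟨ψ, hψ, hA, ⟨i0, ⟨x0, hx0⟩, hi0⟩, hbox, hgp⟩ :=
    exists_good_s16 f h1 hq δ ε hδ0 U0 hU0 hne hgap
  have hK := compact_range hpc ψ
  set K := Set.range fun (x : S) (i : ℕ) => ψ i x with hKdef
  have : CompactSpace K := isCompact_iff_compactSpace.1 hK
  let e : S → K := fun x => ⟨fun i => ψ i x, x, rfl⟩
  have hopen : ∀ i, IsOpen {k : K | 0 < k.1 i} := fun i =>
    isOpen_lt continuous_const ((continuous_apply i).comp continuous_subtype_val)
  -- neighbourhoods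
  have hnb : ∀ O : Set K, IsOpen O → ∀ x, e x ∈ O → ∃ k, 0 < ψ k x ∧ ∀ v, 0 < ψ k v → e v ∈ O := by
    rintro O ⟨O', hO', rfl⟩ x hx
    obtain ⟨k, hk, hk2⟩ := hψ.nbhd x O' (hO'.mem_nhds hx)
    exact ⟨k, hk, hk2⟩
  let code : Finset (ℕ × ℚ) → Set S := fun c => {x | (∀ y, ∃ t ∈ c, 0 < ψ t.1 y) ∧
    ∀ t ∈ c, ∀ v ∈ EE f δ ψ x, 0 < ψ t.1 v → |f x v - t.2| ≤ 6 * δ}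
  have hcode : ∀ x, ∃ c, x ∈ code c := by
    intro x
    choose k hk q hkq using fun y => local_code hpc f h1 h2 δ hδ0 ψ hψ hA x y
    obtain ⟨s, hs⟩ := isCompact_univ.elim_finite_subcover (fun y : S => {l : K | 0 < l.1 (k y)})
      (fun y => hopen _) (by
        rintro ⟨_, y, rfl⟩ -
        exact mem_iUnion.2 ⟨y, hk y⟩)
    classical
    refine ⟨s.image fun y => (k y, q y), ?_, ?_⟩
    · intro y
      have := hs (mem_univ (e y))
      simp only [mem_iUnion] at this
      obtain ⟨z, hz, hzy⟩ := this
      exact ⟨_, Finset.mem_image_of_mem _ hz, hzy⟩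
    · intro t ht
      obtain ⟨z, hz, rfl⟩ := Finset.mem_image.1 ht
      exact hkq z
  let D : ℕ → Set K := fun j => {l | ∃ i' j', Box f δ (ψ i') (ψ j') ∧ 0 < l.1 i' ∧
    ∃ v, 0 < ψ j v ∧ 0 < ψ j' v}
  have hD : ∀ j, IsOpen (D j) := by
    intro j
    rw [isOpen_iff_forall_mem_open]
    rintro l ⟨i', j', hb, hl, hv⟩
    exact ⟨{k : K | 0 < k.1 i'}, fun k hk => ⟨i', j', hb, hk, hv⟩, hopen i', hl⟩
  let Gen : Set S := {x | ∀ j, (∃ v, 0 < ψ j v) → e x ∈ D j}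
  let F : Finset (ℕ × ℚ) ⊕ {j : ℕ // ∃ v, 0 < ψ j v} → Set K := fun t =>
    Sum.casesOn t (fun c => closure (e '' (code c ∩ Gen))) (fun j => (D j)ᶜ)
  have hdense := dense_iUnion_interior_of_closed (f := F)
    (by
      rintro (c | j)
      · exact isClosed_closure
      · exact (hD _).isClosed_compl)
    (by
      rw [eq_univ_iff_forall]
      rintro ⟨_, x, rfl⟩
      rw [mem_iUnion]
      by_cases hx : x ∈ Gen
      · obtain ⟨c, hc⟩ := hcode x
        exact ⟨Sum.inl c, subset_closure ⟨x, ⟨hc, hx⟩, rfl⟩⟩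
      · simp only [Gen, mem_ofPred_eq] at hx
        push Not at hx
        obtain ⟨j, hj, hjx⟩ := hx
        exact ⟨Sum.inr ⟨j, hj⟩, hjx⟩)
  obtain ⟨k, hk0, hk⟩ := hdense.inter_open_nonempty _ (hopen i0) ⟨e x0, hx0⟩
  obtain ⟨t, ht⟩ := mem_iUnion.1 hk
  obtain ⟨_, x, rfl⟩ := k
  obtain ⟨θ, hθx, hθ⟩ := hnb _ ((hopen i0).inter isOpen_interior) x ⟨hk0, ht⟩
  rcases t with c | ⟨j, hj⟩
  · obtain ⟨i1, i2, j, ⟨a1, ha1⟩, ⟨a2, ha2⟩, hjn, s1, s2, hg⟩ := hgp θ ⟨x, hθx⟩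
      (fun v hv => hi0 v (hθ v hv).1)
    have pick : ∀ i a, 0 < ψ i a → 0 < ψ θ a → ∃ z ∈ code c ∩ Gen, 0 < ψ i z := by
      intro i a h h'
      have hc : e a ∈ closure (e '' (code c ∩ Gen)) := interior_subset (hθ a h').2
      obtain ⟨_, h3, z, hz, rfl⟩ := mem_closure_iff.1 hc _ (hopen i) h
      exact ⟨z, hz, h3⟩
    obtain ⟨z1, ⟨hz1, hG1⟩, hp1⟩ := pick i1 a1 ha1 (s1 _ ha1)
    obtain ⟨z2, ⟨hz2, hG2⟩, hp2⟩ := pick i2 a2 ha2 (s2 _ ha2)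
    obtain ⟨i', j', hb, hi', v, hv, hv'⟩ := hG1 j hjn
    obtain ⟨l, hl⟩ := hψ.pos_inf j j'
    obtain ⟨i'', j'', hb', hi'', w, hw, hw'⟩ := hG2 l ⟨v, (hl v).2 ⟨hv, hv'⟩⟩
    rw [hl] at hw
    obtain ⟨t, ht, htw⟩ := hz1.1 w
    have e1 := hz1.2 t ht w ⟨i', j', hb, hi', hw.2⟩ htw
    have e2 := hz2.2 t ht w ⟨i'', j'', hb', hi'', hw'⟩ htw
    have e3 := hg z1 z2 w hp1 hp2 hw.1
    have e4 := abs_sub_le (f z1 w) t.2 (f z2 w)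
    have e5 := abs_sub_comm (t.2 : ℝ) (f z2 w)
    linarith
  · obtain ⟨i', j', ⟨a, ha⟩, ⟨b, hb⟩, s1, s2, hbx⟩ := hbox θ j ⟨x, hθx⟩ hj
    have hc : e a ∈ (D j)ᶜ := interior_subset (hθ a (s1 a ha)).2
    exact hc ⟨i', j', hbx, ha, b, s2 b hb, hb⟩

end Osc
section Groth

variable {S : Type*} [TopologicalSpace S]

theorem QC.flip {f : S → S → ℝ} (h : QC f) : QC (fun x y => f y x) := by
  intro x y ε hε U V hU hV hx hy
  obtain ⟨U', V', a, b, c, d, e, g, k⟩ := h y x ε hε V U hV hU hy hx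
  exact ⟨V', U', b, a, d, c, g, e, fun u hu v hv => k v hv u hu⟩

theorem closure_continuous [T35Space S] (hpc : IsPseudocompact S) (f : S → S → ℝ)
    (h1 : ∀ x, Continuous (f x)) (h2 : ∀ y, Continuous fun x => f x y) (hq : QC f)
    (p : S → ℝ) (hp : p ∈ closure (Set.range f)) : Continuous p := by
  -- approximation of p on finitely many points by open sets
  have happ : ∀ (s : Finset S) (ε : ℝ), 0 < ε →
      ∃ U : Set S, IsOpen U ∧ U.Nonempty ∧ ∀ u ∈ U, ∀ y ∈ s, |f u y - p y| < ε := by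
    intro s ε hε
    refine ⟨⋂ y ∈ s, {u | |f u y - p y| < ε}, ?_, ?_, ?_⟩
    · refine isOpen_biInter_finset fun y _ => isOpen_lt ?_ continuous_const
      have := h2 y
      fun_prop
    · have ho : IsOpen (⋂ y ∈ s, {g : S → ℝ | |g y - p y| < ε}) :=
        isOpen_biInter_finset fun y _ => isOpen_lt (by fun_prop) continuous_const
      obtain ⟨_, hg, u, rfl⟩ := mem_closure_iff.1 hp _ ho (by simp [hε])
      exact ⟨u, by simpa using hg⟩
    · intro u hu y hy
      simp only [mem_iInter] at hu
      exact hu y hy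
  have hmain : ∀ ε : ℝ, 0 < ε → ∃ O : Set S, Dense O ∧ ∀ y, ∃ N, IsOpen N ∧ y ∈ N ∧
      ∀ v ∈ N, v ∈ O → |p v - p y| ≤ 10 * ε := by
    intro ε hε
    let O : Set S := {v | ∃ V, IsOpen V ∧ v ∈ V ∧ ∀ a ∈ V, ∀ b ∈ V, ∀ x, |f x a - f x b| ≤ ε}
    have hO : Dense O := by
      rw [dense_iff_inter_open]
      intro U hU hne
      obtain ⟨V, hVU, hV, ⟨v, hv⟩, h⟩ := small_osc hpc (fun x y => f y x) h2 h1 hq.flip ε hε U hU hne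
      exact ⟨v, hVU hv, V, hV, hv, h⟩
    refine ⟨O, hO, ?_⟩
    intro y
    by_contra hcon
    push Not at hcon
    obtain ⟨s, hsP, hsr⟩ := exists_seq_of_forall_finset_exists
      (fun t : S × S => (∃ U, IsOpen U ∧ t.1 ∈ U ∧ ∀ a ∈ U, ∀ b ∈ U, ∀ z, |f a z - f b z| ≤ ε) ∧
        t.2 ∈ O ∧ |f t.1 y - p y| < ε ∧ |f t.1 t.2 - f t.1 y| < ε ∧ 10 * ε < |p t.2 - p y|)
      (fun t t' => |f t'.1 t.2 - p t.2| < ε ∧ |f t.1 t'.2 - f t.1 y| < ε)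
      (by
        intro s _
        classical
        obtain ⟨U, hU, hUn, hUs⟩ := happ (insert y (s.image Prod.snd)) ε hε
        obtain ⟨U', hUU, hU', ⟨x, hx⟩, hosc⟩ := small_osc hpc f h1 h2 hq ε hε U hU hUn
        obtain ⟨v, hv, hvO, hvp⟩ := hcon
          (⋂ z ∈ insert x (s.image Prod.fst), {w | |f z w - f z y| < ε})
          (isOpen_biInter_finset fun z _ => isOpen_lt (by have := h1 z; fun_prop) continuous_const)
          (by simp [hε])
        simp only [mem_iInter] at hv
        refine ⟨(x, v), ⟨⟨U', hU', hx, hosc⟩, hvO, hUs x (hUU hx) y (by simp),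
          hv x (by simp), hvp⟩, ?_⟩
        intro t ht
        exact ⟨hUs x (hUU hx) _ (Finset.mem_insert_of_mem (Finset.mem_image_of_mem _ ht)),
          hv _ (Finset.mem_insert_of_mem (Finset.mem_image_of_mem _ ht))⟩)
    choose hU hV hy hxy hpy using hsP
    choose U hUo hUx hUosc using hU
    choose V hVo hVx hVosc using hV
    obtain ⟨x', hx'⟩ := exists_cluster hpc U hUo (fun n => ⟨_, hUx n⟩)
    obtain ⟨y', hy'⟩ := exists_cluster hpc V hVo (fun n => ⟨_, hVx n⟩)
    have near : ∀ i n, i ≤ n → ∀ u ∈ U i, ∀ v ∈ V n, |f u v - p y| ≤ 4 * ε := by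
      intro i n hin u hu v hv
      have e1 : |f (s i).1 (s n).2 - f (s i).1 y| < ε := by
        rcases hin.lt_or_eq with h | rfl
        · exact (hsr i n h).2
        · exact hxy i
      have e2 := hy i
      have e3 := hUosc i u hu _ (hUx i) v
      have e4 := hVosc n v hv _ (hVx n) (s i).1
      have t1 := abs_sub_le (f u v) (f (s i).1 v) (p y)
      have t2 := abs_sub_le (f (s i).1 v) (f (s i).1 (s n).2) (p y)
      have t3 := abs_sub_le (f (s i).1 (s n).2) (f (s i).1 y) (p y)
      linarith
    have far : ∀ i n, i < n → ∀ u ∈ U n, ∀ v ∈ V i, 7 * ε ≤ |f u v - p y| := by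
      intro i n hin u hu v hv
      have e1 := (hsr i n hin).1
      have e2 := hpy i
      have e3 := hUosc n _ (hUx n) u hu v
      have e4 := hVosc i _ (hVx i) v hv (s n).1
      have t1 := abs_sub_le (p (s i).2) (f (s n).1 (s i).2) (p y)
      have t2 := abs_sub_le (f (s n).1 (s i).2) (f (s n).1 v) (p y)
      have t3 := abs_sub_le (f (s n).1 v) (f u v) (p y)
      have t4 := abs_sub_comm (p (s i).2) (f (s n).1 (s i).2)
      linarith
    have c1 : |f x' y' - p y| ≤ 4 * ε := by
      refine hx'.le (fun u => |f u y' - p y|) (by have := h2 y'; fun_prop) _ 0 ?_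
      intro i _ u hu
      refine hy'.le (fun v => |f u v - p y|) (by have := h1 u; fun_prop) _ i ?_
      intro n hn v hv
      exact near i n hn u hu v hv
    have c2 : 7 * ε ≤ |f x' y' - p y| := by
      refine hy'.ge (fun v => |f x' v - p y|) (by have := h1 x'; fun_prop) _ 0 ?_
      intro i _ v hv
      refine hx'.ge (fun u => |f u v - p y|) (by have := h2 v; fun_prop) _ (i+1) ?_
      intro n hn u hu
      exact far i n hn u hu v hv
    linarith
  rw [continuous_iff_continuousAt]
  intro y
  rw [ContinuousAt, Metric.tendsto_nhds]
  intro r hr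
  obtain ⟨O, hO, hN⟩ := hmain (r / 30) (by positivity)
  obtain ⟨N, hNo, hyN, h⟩ := hN y
  filter_upwards [hNo.mem_nhds hyN] with z hz
  obtain ⟨N', hNo', hzN', h'⟩ := hN z
  obtain ⟨v, ⟨hv1, hv2⟩, hvO⟩ := hO.inter_open_nonempty _ (hNo.inter hNo') ⟨z, hz, hzN'⟩
  have e1 := h v hv1 hvO
  have e2 := h' v hv2 hvO
  have e3 := abs_sub_le (p z) (p v) (p y)
  have e4 := abs_sub_comm (p z) (p v)
  rw [Real.dist_eq]
  linarith

theorem unif_at_one [Monoid S] [T35Space S] (hpc : IsPseudocompact S) (φ : S → ℝ)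
    (hφ : Continuous φ) (hl : ∀ a : S, Continuous fun x => a * x)
    (hr : ∀ a : S, Continuous fun x => x * a)
    (hq : QC fun x y : S => φ (x * y)) (G : Set S) (hone : (1 : S) ∈ G)
    (hmul : ∀ a ∈ G, ∀ b ∈ G, a * b ∈ G)
    (hinv : ∀ g ∈ G, ∃ h ∈ G, g * h = 1 ∧ h * g = 1) (ε : ℝ) (hε : 0 < ε) :
    ∃ U : Set S, IsOpen U ∧ 1 ∈ U ∧ ∀ g ∈ U, g ∈ G → ∀ y, |φ (g * y) - φ y| ≤ ε := by
  by_contra hcon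
  push Not at hcon
  let f : S → S → ℝ := fun x y => φ (x * y)
  have h1 : ∀ x, Continuous (f x) := fun x => hφ.comp (hl x)
  have h2 : ∀ y, Continuous fun x => f x y := fun y => hφ.comp (hr y)
  have hgap : ∀ a ∈ G, ∀ U : Set S, IsOpen U → a ∈ U →
      ∃ a' ∈ U, a' ∈ G ∧ ∃ y, ε < |f a' y - f a y| := by
    intro a ha U hU haU
    obtain ⟨b, hb, hab, hba⟩ := hinv a ha
    obtain ⟨g, hg, hgG, y, hy⟩ := hcon ((fun x => x * a) ⁻¹' U) (hU.preimage (hr a)) (by simpa using haU)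
    refine ⟨g * a, hg, hmul _ hgG _ ha, b * y, ?_⟩
    have : a * (b * y) = y := by rw [← mul_assoc, hab, one_mul]
    simp only [f, mul_assoc, this]
    exact hy
  have A1 : ∀ (a : S) (l : List S) (n : ℕ), ∃ a' b : S, a ∈ G → a' ∈ G ∧
      (∀ c ∈ l, |f a' c - f a c| < 1 / ((n : ℝ) + 1)) ∧ ε < |f a' b - f a b| := by
    intro a l n
    by_cases ha : a ∈ G
    · classical
      obtain ⟨a', ha', haG, y, hy⟩ := hgap a ha
        (⋂ c ∈ l.toFinset, {x | |f x c - f a c| < 1 / ((n : ℝ) + 1)})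
        (isOpen_biInter_finset fun z _ => isOpen_lt (by have := h2 z; fun_prop) continuous_const)
        (by
          simp only [mem_iInter]
          intro c _
          simp only [mem_ofPred_eq, sub_self, abs_zero]
          positivity)
      simp only [mem_iInter] at ha'
      exact ⟨a', y, fun _ => ⟨haG, fun c hc => ha' c (by simpa using hc), hy⟩⟩
    · exact ⟨1, 1, fun h => absurd h ha⟩
  choose a' b' hab using A1
  obtain ⟨C, hC0, hCc, hC⟩ := closing
    (fun l : List S => ⋃ a : {a // a ∈ l}, ⋃ n : ℕ, {a' a l n, b' a l n})
    (fun l => by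
      have : Countable {a // a ∈ l} := (List.finite_toSet l).countable
      exact Set.countable_iUnion fun a => Set.countable_iUnion fun b => (Set.toFinite _).countable)
    {1} (countable_singleton _)
  have h1C : (1 : S) ∈ C := hC0 rfl
  obtain ⟨α, hα⟩ := (hCc.mono (inter_subset_left : C ∩ G ⊆ C)).exists_eq_range ⟨1, h1C, hone⟩
  obtain ⟨β, rfl⟩ := hCc.exists_eq_range ⟨1, h1C⟩
  have hαm : ∀ i, α i ∈ range β ∩ G := fun i => by rw [hα]; exact mem_range_self i
  let res : (S → ℝ) → (ℕ → ℝ) := fun p i => p (β i)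
  have hres : Continuous res := by fun_prop
  -- approximating sequences
  have hseq : ∀ a ∈ range α, ∃ (x y : ℕ → S), (∀ n, x n ∈ range α) ∧ (∀ n, y n ∈ range β) ∧
      Tendsto (fun n => res (f (x n))) atTop (𝓝 (res (f a))) ∧
      ∀ n, ε < |f (x n) (y n) - f a (y n)| := by
    intro a ha
    rw [← hα] at ha
    let l : ℕ → List S := fun n => a :: (List.range n).map β
    have hl' : ∀ n, ∀ t ∈ l n, t ∈ range β := by
      intro n t ht
      rcases List.mem_cons.1 ht with rfl | ht
      · exact ha.1
      · obtain ⟨i, -, rfl⟩ := List.mem_map.1 ht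
        exact mem_range_self i
    have hin : ∀ n, a' a (l n) n ∈ range β ∧ b' a (l n) n ∈ range β := by
      intro n
      have := hC (l n) (hl' n)
      constructor
      · exact this (mem_iUnion.2 ⟨⟨a, by simp [l]⟩, mem_iUnion.2 ⟨n, by simp⟩⟩)
      · exact this (mem_iUnion.2 ⟨⟨a, by simp [l]⟩, mem_iUnion.2 ⟨n, by simp⟩⟩)
    refine ⟨fun n => a' a (l n) n, fun n => b' a (l n) n, ?_, fun n => (hin n).2, ?_, ?_⟩
    · intro n
      rw [← hα]
      exact ⟨(hin n).1, (hab a (l n) n ha.2).1⟩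
    · rw [tendsto_pi_nhds]
      intro i
      rw [tendsto_iff_dist_tendsto_zero]
      refine squeeze_zero' (Eventually.of_forall fun n => dist_nonneg) ?_
        (tendsto_one_div_add_atTop_nhds_zero_nat (𝕜 := ℝ))
      filter_upwards [eventually_gt_atTop i] with n hn
      refine ((hab a (l n) n ha.2).2.1 (β i) ?_).le
      exact List.mem_cons_of_mem _ (List.mem_map.2 ⟨i, List.mem_range.2 hn, rfl⟩)
    · intro n
      exact (hab a (l n) n ha.2).2.2
  -- the compact set
  obtain ⟨M, hM⟩ := hpc φ hφ
  let K : Set (S → ℝ) := closure (range fun i => f (α i))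
  have hK : IsCompact K := by
    have hB : IsCompact (Set.univ.pi fun _ : S => Set.Icc (-M) M) :=
      isCompact_univ_pi fun i => isCompact_Icc
    refine hB.of_isClosed_subset isClosed_closure (closure_minimal ?_ hB.isClosed)
    rintro _ ⟨i, rfl⟩ y -
    exact abs_le.1 (hM _)
  have hKc : ∀ p ∈ K, Continuous p := by
    intro p hp
    refine closure_continuous hpc f h1 h2 hq p (closure_mono ?_ hp)
    rintro _ ⟨i, rfl⟩
    exact mem_range_self _
  let ψ : ℕ → C(S, ℝ) := fun i => ⟨f (α i), h1 _⟩
  have hL := compact_range hpc ψ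
  have hLc : CompactSpace (Set.range fun (x : S) (i : ℕ) => ψ i x) := isCompact_iff_compactSpace.1 hL
  have hfac : ∀ p ∈ K, ∃ h : C(Set.range fun (x : S) (i : ℕ) => ψ i x, ℝ),
      ∀ x, p x = h ⟨_, x, rfl⟩ := by
    intro p hp
    refine factor hpc ψ p (hKc p hp) ?_
    intro x y hxy
    have hcl : IsClosed {g : S → ℝ | g x = g y} :=
      isClosed_eq (continuous_apply x) (continuous_apply y)
    refine closure_minimal ?_ hcl hp
    rintro _ ⟨i, rfl⟩
    exact hxy i
  obtain ⟨d, hd⟩ := TopologicalSpace.exists_dense_seq C(Set.range fun (x : S) (i : ℕ) => ψ i x, ℝ)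
  let P : ℕ → Set (S → ℝ) := fun i => K ∩ ⋂ y, {p | |p y - d i ⟨_, y, rfl⟩| ≤ ε / 4}
  have hP : ∀ i, IsCompact (P i) := fun i => hK.inter_right
    (isClosed_iInter fun y => isClosed_le (by fun_prop) continuous_const)
  have hcov : ∀ p ∈ K, ∃ i, p ∈ P i := by
    intro p hp
    obtain ⟨h, hh⟩ := hfac p hp
    obtain ⟨i, hi⟩ := hd.exists_dist_lt h (show 0 < ε / 4 by positivity)
    refine ⟨i, hp, mem_iInter.2 fun y => ?_⟩
    have := (ContinuousMap.dist_le (by positivity)).1 hi.le ⟨_, y, rfl⟩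
    rw [Real.dist_eq, ← hh] at this
    exact this
  have hKB : IsCompact (res '' K) := hK.image hres
  have : CompactSpace (res '' K) := isCompact_iff_compactSpace.1 hKB
  have hKne : ∀ a ∈ range α, f a ∈ K := by
    rintro _ ⟨i, rfl⟩
    exact subset_closure ⟨i, rfl⟩
  have : Nonempty (res '' K) := ⟨⟨_, _, hKne _ (mem_range_self 0), rfl⟩⟩
  obtain ⟨i, ⟨_, q, hq1, rfl⟩, hint⟩ := nonempty_interior_of_iUnion_of_closed
    (f := fun i => (Subtype.val ⁻¹' (res '' P i) : Set (res '' K)))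
    (fun i => ((hP i).image hres).isClosed.preimage continuous_subtype_val)
    (by
      rw [eq_univ_iff_forall]
      rintro ⟨_, p, hp, rfl⟩
      obtain ⟨i, hi⟩ := hcov p hp
      exact mem_iUnion.2 ⟨i, p, hi, rfl⟩)
  obtain ⟨O, hO, hOeq⟩ := isOpen_induced_iff.1
    (isOpen_interior (s := (Subtype.val ⁻¹' (res '' P i) : Set (res '' K))))
  have hqO : res q ∈ O := by
    have : (⟨res q, q, hq1, rfl⟩ : res '' K) ∈ Subtype.val ⁻¹' O := by rw [hOeq]; exact hint
    exact this
  obtain ⟨_, haO, j, rfl⟩ := mem_closure_iff.1 hq1 _ (hO.preimage hres) hqO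
  have hOP : ∀ a ∈ range α, res (f a) ∈ O → ∃ p ∈ P i, res p = res (f a) := by
    intro a ha hO'
    have : (⟨res (f a), f a, hKne a ha, rfl⟩ : res '' K) ∈
        interior (Subtype.val ⁻¹' (res '' P i) : Set (res '' K)) := by rw [← hOeq]; exact hO'
    obtain ⟨p, hp, hpe⟩ : res (f a) ∈ res '' P i := (interior_subset this :)
    exact ⟨p, hp, hpe⟩
  obtain ⟨x, y, hx, hy, hlim, hg⟩ := hseq (α j) (mem_range_self j)
  obtain ⟨n, hn⟩ := (hlim.eventually (hO.mem_nhds haO)).exists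
  obtain ⟨p1, hp1, e1⟩ := hOP _ (mem_range_self j) haO
  obtain ⟨p2, hp2, e2⟩ := hOP _ (hx n) hn
  obtain ⟨m, hm⟩ := hy n
  have g1 := congrFun e1 m
  have g2 := congrFun e2 m
  simp only [res, hm] at g1 g2
  have k1 := mem_iInter.1 hp1.2 (y n)
  have k2 := mem_iInter.1 hp2.2 (y n)
  simp only [mem_ofPred_eq, g1, g2] at k1 k2
  have k3 := hg n
  have k4 := abs_sub_le (f (x n) (y n)) (d i ⟨_, y n, rfl⟩) (f (α j) (y n))
  have k5 := abs_sub_comm (d i ⟨_, y n, rfl⟩) (f (α j) (y n))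
  linarith

end Groth

theorem subgroup_of_pseudocompact_quasicontinuous_monoid_topological
    {S : Type*} [Monoid S] [TopologicalSpace S] [T35Space S]
    (hsep : SeparatelyContinuous fun p : S × S => p.1 * p.2)
    (hqc : QuasiContinuous fun p : S × S => p.1 * p.2)
    (hpc : IsPseudocompact S)
    (G : Set S) (hone : (1 : S) ∈ G)
    (hmulclosed : ∀ a ∈ G, ∀ b ∈ G, a * b ∈ G)
    (hinv : ∀ g ∈ G, ∃ h ∈ G, g * h = 1 ∧ h * g = 1) :
    Continuous (fun p : G × G => (p.1 : S) * (p.2 : S)) ∧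
    ∃ inv : G → G, (∀ g : G, (g : S) * (inv g : S) = 1 ∧ (inv g : S) * (g : S) = 1) ∧
      Continuous inv := by
  have hl : ∀ a : S, Continuous fun x => a * x := hsep.1
  have hr : ∀ a : S, Continuous fun x => x * a := hsep.2
  have hQ : ∀ φ : C(S, ℝ), QC fun x y : S => φ (x * y) := by
    intro φ x y ε hε U V hU hV hx hy
    obtain ⟨W, hW, ⟨⟨a, b⟩, hab⟩, hWs, hWi⟩ := hqc (x, y) {z | |φ z - φ (x * y)| < ε}
      (isOpen_lt (by fun_prop) continuous_const) (by simpa using hε) (U ×ˢ V) (hU.prod hV) ⟨hx, hy⟩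
    obtain ⟨A, B, hA, hB, ha, hb, hAB⟩ := isOpen_prod_iff.1 hW a b hab
    refine ⟨A, B, hA, hB, ⟨a, ha⟩, ⟨b, hb⟩, ?_, ?_, ?_⟩
    · intro u hu
      exact (hWs (hAB (mk_mem_prod hu hb))).1
    · intro v hv
      exact (hWs (hAB (mk_mem_prod ha hv))).2
    · intro u hu v hv
      exact hWi ⟨(u, v), hAB (mk_mem_prod hu hv), rfl⟩
  have key : ∀ φ : C(S, ℝ), ∃ U : Set S, IsOpen U ∧ 1 ∈ U ∧
      ∀ g ∈ U, g ∈ G → ∀ y, |φ (g * y) - φ y| ≤ 1 / 3 := fun φ =>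
    unif_at_one hpc φ φ.continuous hl hr (hQ φ) G hone hmulclosed hinv (1 / 3) (by norm_num)
  refine ⟨?_, ?_⟩
  · rw [continuous_iff_continuousAt]
    rintro ⟨⟨g, hg⟩, ⟨h, hh⟩⟩
    rw [ContinuousAt, tendsto_nhds]
    intro V hV hgV
    obtain ⟨φ, hφ1, -, hφ0⟩ := exists_fun_pos V hV (g * h) hgV
    obtain ⟨k, hk, hgk, hkg⟩ := hinv g hg
    obtain ⟨U, hU, h1U, hUo⟩ := key (φ.comp ⟨fun x => g * x, hl g⟩)
    have o1 : IsOpen {p : G × G | k * (p.1 : S) ∈ U} :=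
      hU.preimage ((hl k).comp (continuous_subtype_val.comp continuous_fst))
    have o2 : IsOpen {p : G × G | 1 / 2 < φ (g * (p.2 : S))} :=
      isOpen_lt continuous_const
        (φ.continuous.comp ((hl g).comp (continuous_subtype_val.comp continuous_snd)))
    filter_upwards [o1.mem_nhds (show k * g ∈ U by rw [hkg]; exact h1U),
      o2.mem_nhds (show 1 / 2 < φ (g * h) by rw [hφ1]; norm_num)]
    rintro ⟨⟨x, hx⟩, ⟨y, hy⟩⟩ hx1 hy1
    have e := hUo (k * x) hx1 (hmulclosed _ hk _ hx) y
    have e' : g * (k * x * y) = x * y := by rw [← mul_assoc, ← mul_assoc, hgk, one_mul]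
    simp only [ContinuousMap.comp_apply, ContinuousMap.coe_mk, e'] at e
    simp only [mem_ofPred_eq] at hy1
    by_contra hn
    rw [hφ0 _ hn, abs_le] at e
    linarith [e.1]
  · choose inv hinvG hinv1 hinv2 using fun g : G => hinv g g.2
    refine ⟨fun g => ⟨inv g, hinvG g⟩, fun g => ⟨hinv1 g, hinv2 g⟩, ?_⟩
    refine Continuous.subtype_mk ?_ _
    rw [continuous_iff_continuousAt]
    intro g
    rw [ContinuousAt, tendsto_nhds]
    intro V hV hgV
    obtain ⟨φ, hφ1, -, hφ0⟩ := exists_fun_pos V hV (inv g) hgV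
    obtain ⟨U, hU, h1U, hUo⟩ := key (φ.comp ⟨fun x => x * inv g, hr (inv g)⟩)
    have o1 : IsOpen {x : G | inv g * (x : S) ∈ U} :=
      hU.preimage ((hl (inv g)).comp continuous_subtype_val)
    filter_upwards [o1.mem_nhds (show inv g * (g : S) ∈ U by rw [hinv2]; exact h1U)]
    intro x hx
    have e := hUo (inv g * x) hx (hmulclosed _ (hinvG g) _ x.2) (inv x * g)
    have e1 : inv g * (x : S) * (inv x * g) * inv g = inv g := by
      calc inv g * (x : S) * (inv x * g) * inv g
          = inv g * ((x : S) * inv x) * (g * inv g) := by simp only [mul_assoc]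
        _ = inv g := by rw [hinv1, hinv1, mul_one, mul_one]
    have e2 : inv x * (g : S) * inv g = inv x := by rw [mul_assoc, hinv1, mul_one]
    simp only [ContinuousMap.comp_apply, ContinuousMap.coe_mk, e1, e2, hφ1] at e
    by_contra hn
    rw [hφ0 _ hn, abs_le] at e
    linarith [e.2]
end
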